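/- Let 𝓑 ⊆ ℕ and let 𝓒 ⊆ ℕ be taut, with η_𝓒 = 1_{F_𝓒}. The following twelve conditions are all equivalent: (a) every b ∈ 𝓑 has a divisor in 𝓒 and every c ∈ 𝓒 has a divisor in 𝓑*; (b) η* ≤ η_𝓒 ≤ η coordinatewise; (c) X_{η_𝓒} ⊆ X_η; (d) η_𝓒 ∈ X_η; (e) ν_{η_𝓒} ∈ P(X_η); (f) P(X_{η_𝓒}) ⊆ P(X_η); (a') every b' ∈ 𝓑' has a divisor in 𝓒 and every c ∈ 𝓒 has a divisor in 𝓑*; (b') η* ≤ η_𝓒 ≤ η' coordinatewise; (c') X_{η_𝓒} ⊆ X_{η'}; (d') η_𝓒 ∈ X_{η'}; (e') ν_{η_𝓒} ∈ P(X_{η'}); (f') P(X_{η_𝓒}) ⊆ P(X_{η'}). -/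

import Mathlib

/-!
The density `dlt A` of the multiples of `A` is the supremum of the densities of the multiples of
finite subsets of `A`, all of which are periodic sets. Davenport–Erdős (`lowerDensity_le_dlt`)
identifies it with the lower density: for a set `S` closed under multiples, the probability of `S`
for the zeta distribution with parameter `s` increases as `s` decreases to `1` (`Z_monotone`),
because `n ^ (-s')` is the Dirichlet convolution of `n ^ (-s)` with a nonnegative function. In the
same way a Behrend set has `dlt` equal to `1` (`dlt_of_behrend`).

By a zero-one law (`zero_one`), either `dlt A = 1` or the elements of `A` without small prime
factors have few multiples. A taut `C` contains no `d * A` with `dlt A = 1`, for `d > 0` and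
`1 ∉ A` (`taut_dlt`), so the second alternative holds for the cofactors `c / gcd (c, t)` of a
`C`-free `t`. Hence most of a residue class `n0 + Pℤ` with `gcd (n0, P) = t` is `C`-free once `P`
is divisible enough (`class_almost_free`), and every finite pattern of free integers recurs with
positive frequency (`many_free`).

On the arithmetic side, `E B` denotes the set of `d` such that `d * a ∈ B` with `a` coprime to any
prescribed number; having a divisor in `E B` is the same as having one in `Bstar B`. Replacing `B`
by `Bprime B` does not change this (`E_Bprime_iff`), and if every element of `B` has a divisor in
`C`, then so has every element of `Bprime B` (`Cset_div`). So the primed and unprimed arithmetic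
conditions are equivalent, and it remains to link each to its dynamical versions
(`dynamical_tfae`).

* If the divisibility conditions hold, a window of `eta C` is found in `eta B` by the Chinese
  remainder theorem: each multiple `n` of `C` in the window is a multiple of some `d ∈ E B`, and the
  shift is chosen to be divisible enough and to put a multiple of `d * a ∈ B` at the position of
  `n`, with pairwise coprime cofactors `a`. By `many_free` the `C`-free positions can be kept free
  (`mem_of_div`).
* If `eta C` is in the orbit closure of `eta B` and `b ∈ B`, then `C`-free integers do not occupy
  all residue classes modulo `b`, since translates of `F_B` miss one; so the multiples of `C`
  contain a progression with difference `b`, and `b` has a divisor in `C` (`left_of_mem`). Since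
  long runs of multiples of `c ∈ C` are translated into the multiples of `B`, some divisor of `c`
  lies in `E B` (`right_of_mem`).
* The Mirsky measure charges every cylinder around `eta C` (`recurrence`), so an orbit closure of
  full Mirsky measure contains `eta C` (`mem_of_mirsky`).
-/

open MeasureTheory Filter Topology
open scoped Classical

noncomputable section
namespace BFree


def cnt (A : Set ℤ) (L : ℕ) : ℝ := ∑ n ∈ Finset.Icc (1:ℤ) (L:ℤ), if n ∈ A then (1:ℝ) else 0

def natDensity (A : Set ℤ) (d : ℝ) : Prop := Tendsto (fun L : ℕ => cnt A L / L) atTop (𝓝 d)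

def upperDensity (A : Set ℤ) : ℝ := atTop.limsup fun L : ℕ => cnt A L / L

def lowerDensity (A : Set ℤ) : ℝ := atTop.liminf fun L : ℕ => cnt A L / L

def logDensity (A : Set ℤ) (d : ℝ) : Prop :=
  Tendsto (fun L : ℕ =>
      (∑ n ∈ Finset.Icc (1:ℤ) (L:ℤ), if n ∈ A then (n:ℝ)⁻¹ else 0) / Real.log L)
    atTop (𝓝 d)

def MB (B : Set ℕ) : Set ℤ := {n : ℤ | ∃ b ∈ B, (b:ℤ) ∣ n}

def FB (B : Set ℕ) : Set ℤ := {n : ℤ | n ∉ MB B}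

def eta (B : Set ℕ) : ℤ → Bool := fun n => if n ∈ FB B then true else false

def shift (x : ℤ → Bool) : ℤ → Bool := fun n => x (n + 1)

def shiftn (k : ℕ) (x : ℤ → Bool) : ℤ → Bool := fun n => x (n + (k:ℤ))

def orbitClosure (x : ℤ → Bool) : Set (ℤ → Bool) :=
  closure {y | ∃ m : ℤ, y = fun n => x (n + m)}

def Xeta (B : Set ℕ) : Set (ℤ → Bool) := orbitClosure (eta B)

def InvM (X : Set (ℤ → Bool)) : Set (Measure (ℤ → Bool)) :=
  {μ | IsProbabilityMeasure μ ∧ μ.map shift = μ ∧ μ X = 1}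

def primPart (S : Set ℕ) : Set ℕ := {b ∈ S | ∀ b' ∈ S, b' ∣ b → b' = b}

def Dset (B : Set ℕ) : Set ℕ :=
  {d | ∃ A : Set ℕ, A.Infinite ∧ (∀ a ∈ A, 0 < a) ∧ A.Pairwise Nat.Coprime ∧ ∀ a ∈ A, d * a ∈ B}

def Bstar (B : Set ℕ) : Set ℕ := primPart (B ∪ Dset B)

def etaStar (B : Set ℕ) : ℤ → Bool := eta (Bstar B)

def Behrend (A : Set ℕ) : Prop := (∀ a ∈ A, 0 < a) ∧ logDensity (MB A) 1

def Cset (B : Set ℕ) : Set ℕ := {c | ∃ A : Set ℕ, Behrend A ∧ ∀ a ∈ A, c * a ∈ B}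

def Bprime (B : Set ℕ) : Set ℕ := primPart (B ∪ Cset B)

def etaPrime (B : Set ℕ) : ℤ → Bool := eta (Bprime B)

def Taut (B : Set ℕ) : Prop :=
  ∀ b ∈ B, ∃ d1 d2 : ℝ, logDensity (MB (B \ {b})) d1 ∧ logDensity (MB B) d2 ∧ d1 < d2

def Per (x : ℤ → Bool) (s : ℕ) : Set ℤ := {i | ∀ k : ℤ, x (i + (s:ℤ) * k) = x i}

def IsToeplitz (x : ℤ → Bool) : Prop := ∀ i : ℤ, ∃ s : ℕ, 0 < s ∧ i ∈ Per x s

def RegularToeplitz (x : ℤ → Bool) : Prop :=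
  IsToeplitz x ∧ ∃ δ : ℕ → ℝ,
    (∀ r : ℕ, natDensity (⋃ s ∈ Finset.Icc 1 r, Per x s) (δ r)) ∧ Tendsto δ atTop (𝓝 1)

def QuasiGeneric (ℓ : ℕ → ℕ) (x : ℤ → Bool) (ν : Measure (ℤ → Bool)) : Prop :=
  ∀ f : C((ℤ → Bool), ℝ),
    Tendsto (fun i => (∑ n ∈ Finset.Icc 1 (ℓ i), f (shiftn n x)) / (ℓ i : ℝ)) atTop
      (𝓝 (∫ y, f y ∂ν))

def RealizesLowerDensity (A : Set ℤ) (ℓ : ℕ → ℕ) : Prop :=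
  Tendsto ℓ atTop atTop ∧ Tendsto (fun i => cnt A (ℓ i) / (ℓ i : ℝ)) atTop (𝓝 (lowerDensity A))

def IsMirsky (B : Set ℕ) (ν : Measure (ℤ → Bool)) : Prop :=
  IsProbabilityMeasure ν ∧ ∀ ℓ : ℕ → ℕ, RealizesLowerDensity (MB B) ℓ → QuasiGeneric ℓ (eta B) ν

def blocks (X : Set (ℤ → Bool)) (n : ℕ) : Set (Fin n → Bool) :=
  {w | ∃ x ∈ X, ∃ m : ℤ, ∀ i : Fin n, x (m + (i:ℤ)) = w i}

def pCount (X : Set (ℤ → Bool)) (n : ℕ) : ℕ := (blocks X n).ncard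

def topEnt (X : Set (ℤ → Bool)) : ℝ :=
  atTop.limsup fun n : ℕ => Real.logb 2 (pCount X n) / n

def cylinder {n : ℕ} (w : Fin n → Bool) : Set (ℤ → Bool) := {x | ∀ i : Fin n, x ((i:ℕ):ℤ) = w i}

def blockEntropy (μ : Measure (ℤ → Bool)) (n : ℕ) : ℝ :=
  -∑ w : Fin n → Bool, ((μ (cylinder w)).toReal * Real.logb 2 (μ (cylinder w)).toReal)

def measEnt (μ : Measure (ℤ → Bool)) : ℝ := atTop.liminf fun n : ℕ => blockEntropy μ n / n

/-! ### Counting functions of sets of integers -/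

lemma cnt_eq_card (A : Set ℤ) (L : ℕ) :
    cnt A L = (((Finset.Icc (1:ℤ) L).filter (· ∈ A)).card : ℝ) := by
  unfold cnt
  rw [Finset.sum_boole]

lemma sum_Icc_int (g : ℤ → ℝ) (L : ℕ) :
    ∑ n ∈ Finset.Icc (1:ℤ) (L:ℤ), g n = ∑ k ∈ Finset.range L, g ((k:ℤ) + 1) := by
  induction L with
  | zero => simp
  | succ L ih =>
    rw [Finset.sum_range_succ, ← ih]
    have : Finset.Icc (1:ℤ) ((L+1:ℕ):ℤ) = insert ((L:ℤ)+1) (Finset.Icc (1:ℤ) L) := by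
      ext x; simp only [Finset.mem_Icc, Finset.mem_insert]; push_cast; omega
    rw [this, Finset.sum_insert (by simp)]
    ring

lemma cnt_eq_range (A : Set ℤ) (L : ℕ) :
    cnt A L = ∑ k ∈ Finset.range L, if ((k:ℤ) + 1) ∈ A then (1:ℝ) else 0 := by
  unfold cnt
  exact sum_Icc_int (fun n => if n ∈ A then (1:ℝ) else 0) L

lemma cnt_succ (A : Set ℤ) (L : ℕ) :
    cnt A (L+1) = cnt A L + if ((L:ℤ) + 1) ∈ A then (1:ℝ) else 0 := by
  rw [cnt_eq_range, cnt_eq_range, Finset.sum_range_succ]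

lemma cnt_nonneg (A : Set ℤ) (L : ℕ) : 0 ≤ cnt A L := by
  rw [cnt_eq_card]; positivity

lemma cnt_mono {A A' : Set ℤ} (h : A ⊆ A') (L : ℕ) : cnt A L ≤ cnt A' L := by
  rw [cnt_eq_card, cnt_eq_card]
  exact_mod_cast Finset.card_le_card (Finset.monotone_filter_right _ (fun x _ hx => h hx))

lemma cnt_univ (L : ℕ) : cnt Set.univ L = L := by
  rw [cnt_eq_range]; simp

lemma cnt_le (A : Set ℤ) (L : ℕ) : cnt A L ≤ L :=
  (cnt_mono (Set.subset_univ A) L).trans (cnt_univ L).le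

lemma cnt_diff {A A' : Set ℤ} (h : A ⊆ A') (L : ℕ) : cnt (A' \ A) L = cnt A' L - cnt A L := by
  rw [cnt_eq_range, cnt_eq_range, cnt_eq_range, ← Finset.sum_sub_distrib]
  refine Finset.sum_congr rfl fun k _ => ?_
  by_cases h1 : ((k:ℤ)+1) ∈ A
  · simp [h1, h h1]
  · by_cases h2 : ((k:ℤ)+1) ∈ A' <;> simp [h1, h2]

lemma cnt_compl (A : Set ℤ) (L : ℕ) : cnt Aᶜ L = L - cnt A L := by
  have := cnt_diff (Set.subset_univ A) L
  rwa [cnt_univ, ← Set.compl_eq_univ_sdiff] at this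

lemma cnt_union_le (A A' : Set ℤ) (L : ℕ) : cnt (A ∪ A') L ≤ cnt A L + cnt A' L := by
  rw [cnt_eq_range, cnt_eq_range, cnt_eq_range, ← Finset.sum_add_distrib]
  refine Finset.sum_le_sum fun k _ => ?_
  by_cases h1 : ((k:ℤ)+1) ∈ A <;> by_cases h2 : ((k:ℤ)+1) ∈ A' <;> simp [h1, h2]

lemma cnt_biUnion_le {ι : Type*} (I : Finset ι) (S : ι → Set ℤ) (L : ℕ) :
    cnt (⋃ i ∈ I, S i) L ≤ ∑ i ∈ I, cnt (S i) L := by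
  induction I using Finset.induction_on with
  | empty => simp [cnt]
  | insert a s ha ih =>
    rw [Finset.set_biUnion_insert, Finset.sum_insert ha]
    exact (cnt_union_le _ _ L).trans (by linarith)

lemma cnt_shift_le (S : Set ℤ) (n : ℤ) (L : ℕ) : cnt {m | n + m ∈ S} L ≤ cnt S L + |n| := by
  rw [cnt_eq_card, cnt_eq_card]
  have h1 : ((Finset.Icc (1:ℤ) L).filter (· ∈ {m | n + m ∈ S})).card
      ≤ (((Finset.Icc (1:ℤ) L).filter (· ∈ S)) ∪
        (Finset.Icc (1 + n) 0 ∪ Finset.Icc (L + 1 : ℤ) (L + n))).card := by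
    apply Finset.card_le_card_of_injOn (fun m => n + m)
    · intro m hm
      simp only [Finset.coe_filter, Finset.mem_Icc, Set.mem_ofPred_eq] at hm
      simp only [Finset.coe_union, Set.mem_union, Finset.mem_coe, Finset.mem_filter,
        Finset.mem_Icc]
      by_cases h : 1 ≤ n + m ∧ n + m ≤ L
      · exact Or.inl ⟨h, hm.2⟩
      · right; omega
    · intro a _ b _ hab
      simpa using hab
  have h2 := h1.trans (Finset.card_union_le _ _)
  have h3 : (Finset.Icc (1 + n) 0 ∪ Finset.Icc (L + 1 : ℤ) (L + n)).card ≤ n.natAbs := by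
    refine (Finset.card_union_le _ _).trans ?_
    simp only [Int.card_Icc]
    omega
  have h4 : ((n.natAbs : ℕ) : ℝ) = |(n:ℝ)| := by
    rw [Nat.cast_natAbs, Int.cast_abs]
  have h5 : ((((Finset.Icc (1:ℤ) L).filter (· ∈ {m | n + m ∈ S})).card : ℕ) : ℝ) ≤
     (((((Finset.Icc (1:ℤ) L).filter (· ∈ S)).card + n.natAbs : ℕ)) : ℝ) := by
    exact_mod_cast h2.trans (by omega)
  push_cast at h5
  push_cast
  linarith

lemma cnt_dilate_le (S : Set ℤ) (c : ℕ) (hc : 0 < c) (L : ℕ) :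
    cnt {x | ∃ k ∈ S, x = c * k} L ≤ cnt S L := by
  rw [cnt_eq_card, cnt_eq_card]
  norm_cast
  apply Finset.card_le_card_of_injOn (fun x => x / (c:ℤ))
  · intro x hx
    simp only [Finset.coe_filter, Finset.mem_Icc, Set.mem_ofPred_eq] at hx
    obtain ⟨⟨h1, h2⟩, k, hk, rfl⟩ := hx
    have hc' : (0:ℤ) < c := by exact_mod_cast hc
    simp only [Finset.coe_filter, Finset.mem_Icc, Set.mem_ofPred_eq]
    rw [Int.mul_ediv_cancel_left _ hc'.ne']
    refine ⟨⟨?_, ?_⟩, hk⟩ <;> nlinarith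
  · intro x hx y hy hxy
    simp only [Finset.coe_filter, Finset.mem_Icc, Set.mem_ofPred_eq] at hx hy
    obtain ⟨_, k, _, rfl⟩ := hx
    obtain ⟨_, k', _, rfl⟩ := hy
    have hc' : (0:ℤ) < c := by exact_mod_cast hc
    simp only [Int.mul_ediv_cancel_left _ hc'.ne'] at hxy
    rw [hxy]

/-! ### Densities of periodic sets -/

/-- `S` has density `d` with bounded error; this holds for every periodic set. -/
def HasDens (S : Set ℤ) (d : ℝ) : Prop := ∃ K : ℝ, ∀ L : ℕ, |cnt S L - d * L| ≤ K

/-- The counting function of `S` is at most `e * L + O(1)`. -/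
def UB (S : Set ℤ) (e : ℝ) : Prop := ∃ K : ℝ, ∀ L : ℕ, cnt S L ≤ e * L + K

lemma HasDens.ub {S : Set ℤ} {d : ℝ} (h : HasDens S d) : UB S d := by
  obtain ⟨K, hK⟩ := h
  exact ⟨K, fun L => by linarith [(abs_le.1 (hK L)).2]⟩

lemma UB.mono {S S' : Set ℤ} {e e' : ℝ} (h : UB S e) (hS : S' ⊆ S) (he : e ≤ e') : UB S' e' := by
  obtain ⟨K, hK⟩ := h
  refine ⟨K, fun L => (cnt_mono hS L).trans ((hK L).trans ?_)⟩
  have : e * L ≤ e' * L := mul_le_mul_of_nonneg_right he (Nat.cast_nonneg L)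
  linarith

lemma UB.biUnion {ι : Type*} (I : Finset ι) {S : ι → Set ℤ} {e : ι → ℝ}
    (h : ∀ i ∈ I, UB (S i) (e i)) : UB (⋃ i ∈ I, S i) (∑ i ∈ I, e i) := by
  choose! K hK using h
  refine ⟨∑ i ∈ I, K i, fun L => (cnt_biUnion_le I S L).trans ?_⟩
  rw [Finset.sum_mul, ← Finset.sum_add_distrib]
  exact Finset.sum_le_sum fun i hi => hK i hi L

lemma UB.shift {S : Set ℤ} {e : ℝ} (h : UB S e) (n : ℤ) : UB {m | n + m ∈ S} e := by
  obtain ⟨K, hK⟩ := h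
  exact ⟨K + |n|, fun L => (cnt_shift_le S n L).trans (by linarith [hK L])⟩

lemma UB.dilate {S : Set ℤ} {e : ℝ} (h : UB S e) (c : ℕ) (hc : 0 < c) :
    UB {x | ∃ k ∈ S, x = c * k} e := by
  obtain ⟨K, hK⟩ := h
  exact ⟨K, fun L => (cnt_dilate_le S c hc L).trans (hK L)⟩

lemma HasDens.le_of_ub {S : Set ℤ} {d e : ℝ} (h : HasDens S d) (h' : UB S e) : d ≤ e := by
  obtain ⟨K, hK⟩ := h
  obtain ⟨K', hK'⟩ := h'
  by_contra hlt
  push Not at hlt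
  obtain ⟨L, hL⟩ := exists_nat_gt ((K + K') / (d - e))
  rw [div_lt_iff₀ (by linarith)] at hL
  have h1 := (abs_le.1 (hK L)).1
  have h2 := hK' L
  nlinarith

lemma HasDens.mono {S S' : Set ℤ} {d d' : ℝ} (h : HasDens S d) (h' : HasDens S' d')
    (hS : S ⊆ S') : d ≤ d' :=
  h.le_of_ub (h'.ub.mono hS le_rfl)

lemma HasDens.unique {S : Set ℤ} {d d' : ℝ} (h : HasDens S d) (h' : HasDens S d') : d = d' :=
  le_antisymm (h.mono h' subset_rfl) (h'.mono h subset_rfl)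

lemma HasDens.compl {S : Set ℤ} {d : ℝ} (h : HasDens S d) : HasDens Sᶜ (1 - d) := by
  obtain ⟨K, hK⟩ := h
  refine ⟨K, fun L => ?_⟩
  rw [cnt_compl, ← abs_neg]
  convert hK L using 2
  ring

/-- `S` is invariant under translation by `N`. -/
def Perd (S : Set ℤ) (N : ℕ) : Prop := ∀ n k : ℤ, n + N * k ∈ S ↔ n ∈ S

lemma Perd.mul_right {S : Set ℤ} {N : ℕ} (h : Perd S N) (M : ℕ) : Perd S (N * M) := by
  intro n k
  have := h n (M * k)
  rw [← this]; push_cast; rw [mul_assoc]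

lemma Perd.mul_left {S : Set ℤ} {N : ℕ} (h : Perd S N) (M : ℕ) : Perd S (M * N) := by
  rw [mul_comm]; exact h.mul_right M

lemma Perd.inter {S S' : Set ℤ} {N : ℕ} (h : Perd S N) (h' : Perd S' N) : Perd (S ∩ S') N :=
  fun n k => and_congr (h n k) (h' n k)

lemma Perd.compl {S : Set ℤ} {N : ℕ} (h : Perd S N) : Perd Sᶜ N :=
  fun n k => not_congr (h n k)

lemma cnt_add_period {S : Set ℤ} {N : ℕ} (h : Perd S N) (q r : ℕ) :
    cnt S (r + N * q) = cnt S r + cnt S (N * q) := by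
  induction r with
  | zero => simp [cnt_eq_range]
  | succ r ih =>
    rw [show r + 1 + N * q = (r + N * q) + 1 by ring, cnt_succ, cnt_succ, ih]
    have : ((r + N * q : ℕ) : ℤ) + 1 ∈ S ↔ (r:ℤ) + 1 ∈ S := by
      rw [← h ((r:ℤ)+1) q]; push_cast
      rw [show (r:ℤ) + N * q + 1 = r + 1 + N * q by ring]
    simp only [this]
    ring

lemma cnt_period_mul {S : Set ℤ} {N : ℕ} (h : Perd S N) (q : ℕ) :
    cnt S (N * q) = q * cnt S N := by
  induction q with
  | zero => simp [cnt_eq_range]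
  | succ q ih =>
    rw [mul_add, mul_one, add_comm, cnt_add_period h, ih]; push_cast; ring

lemma Perd.hasDens {S : Set ℤ} {N : ℕ} (hN : 0 < N) (h : Perd S N) :
    HasDens S (cnt S N / N) := by
  refine ⟨N, fun L => ?_⟩
  have hN' : (0:ℝ) < N := by exact_mod_cast hN
  have h1 : cnt S L = cnt S (L % N) + (L / N : ℕ) * cnt S N := by
    conv_lhs => rw [← Nat.mod_add_div L N]
    rw [cnt_add_period h, cnt_period_mul h]
  have h2 : (L:ℝ) = (L % N : ℕ) + N * (L / N : ℕ) := by
    exact_mod_cast (Nat.mod_add_div L N).symm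
  have h3 : cnt S L - cnt S N / N * L = cnt S (L % N) - cnt S N / N * (L % N : ℕ) := by
    rw [h1]
    conv_lhs => rw [h2]
    field_simp
    ring
  rw [h3]
  have h4 : ((L % N : ℕ) : ℝ) ≤ N := by exact_mod_cast (Nat.mod_lt L hN).le
  have h5 := cnt_le S (L % N)
  have h6 := cnt_nonneg S (L % N)
  have h7 : cnt S N / N ≤ 1 := by rw [div_le_one hN']; exact cnt_le S N
  have h8 : 0 ≤ cnt S N / N := div_nonneg (cnt_nonneg _ _) hN'.le
  have h9 : 0 ≤ ((L % N : ℕ) : ℝ) := Nat.cast_nonneg _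
  rw [abs_le]
  constructor <;> nlinarith

lemma Perd.mem_iff {S : Set ℤ} {N : ℕ} (h : Perd S N) {a b : ℤ} (hab : (a : ZMod N) = b) :
    a ∈ S ↔ b ∈ S := by
  rw [ZMod.intCast_eq_intCast_iff, Int.modEq_iff_dvd] at hab
  obtain ⟨k, hk⟩ := hab
  rw [show b = a + N * k by linarith, h]

lemma cnt_eq_zmod {S : Set ℤ} {N : ℕ} [NeZero N] (h : Perd S N) :
    cnt S N = ((Finset.univ.filter fun x : ZMod N => ((x.val : ℕ) : ℤ) ∈ S).card : ℝ) := by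
  rw [cnt_eq_card]
  norm_cast
  refine Finset.card_nbij (fun n : ℤ => (n : ZMod N)) ?_ ?_ ?_
  · intro n hn
    simp only [Finset.coe_filter, Finset.mem_Icc, Set.mem_ofPred_eq] at hn
    simp only [Finset.coe_filter, Finset.mem_univ, true_and, Set.mem_ofPred_eq]
    refine (h.mem_iff ?_).2 hn.2
    simp
  · intro a ha b hb hab
    simp only [Finset.coe_filter, Finset.mem_Icc, Set.mem_ofPred_eq] at ha hb
    simp only [ZMod.intCast_eq_intCast_iff, Int.modEq_iff_dvd] at hab
    obtain ⟨k, hk⟩ := hab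
    have hN : (0:ℤ) < N := by exact_mod_cast Nat.pos_of_ne_zero (NeZero.ne N)
    have : k = 0 := by
      by_contra hk0
      rcases lt_or_gt_of_ne hk0 with h1 | h1 <;> nlinarith
    subst this; linarith
  · intro x hx
    simp only [Finset.coe_filter, Finset.mem_univ, true_and, Set.mem_ofPred_eq] at hx
    have hlt := ZMod.val_lt x
    by_cases h0 : x.val = 0
    · refine ⟨N, ?_, ?_⟩
      · simp only [Finset.coe_filter, Finset.mem_Icc, Set.mem_ofPred_eq]
        have hN : 1 ≤ N := Nat.pos_of_ne_zero (NeZero.ne N)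
        refine ⟨⟨by exact_mod_cast hN, le_rfl⟩, ?_⟩
        refine (h.mem_iff ?_).2 hx
        rw [h0]; simp
      · have : x = 0 := (ZMod.val_eq_zero x).1 h0
        simp [this]
    · refine ⟨x.val, ?_, by simp⟩
      simp only [Finset.coe_filter, Finset.mem_Icc, Set.mem_ofPred_eq]
      refine ⟨⟨by omega, by omega⟩, hx⟩

/-- Chinese remainder theorem: periodic sets with coprime periods are independent. -/
lemma cnt_inter_coprime {S S' : Set ℤ} {N N' : ℕ} (hN : 0 < N) (hN' : 0 < N')
    (h : Perd S N) (h' : Perd S' N') (hc : Nat.Coprime N N') :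
    cnt (S ∩ S') (N * N') = cnt S N * cnt S' N' := by
  have : NeZero N := ⟨hN.ne'⟩
  have : NeZero N' := ⟨hN'.ne'⟩
  have : NeZero (N * N') := ⟨(Nat.mul_pos hN hN').ne'⟩
  rw [cnt_eq_zmod ((h.mul_right N').inter (h'.mul_left N)), cnt_eq_zmod h, cnt_eq_zmod h']
  norm_cast
  rw [← Finset.card_product]
  refine Finset.card_nbij (ZMod.chineseRemainder hc) ?_ (ZMod.chineseRemainder hc).injective.injOn ?_
  · intro x hx
    simp only [Finset.coe_filter, Finset.mem_univ, true_and, Set.mem_ofPred_eq,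
      Set.mem_inter_iff] at hx
    simp only [Finset.coe_product, Set.mem_prod, Finset.coe_filter, Finset.mem_univ, true_and,
      Set.mem_ofPred_eq]
    have e : ZMod.chineseRemainder hc x = ZMod.chineseRemainder hc ((x.val : ℕ)) := by simp
    rw [e, map_natCast]
    refine ⟨(h.mem_iff ?_).2 hx.1, (h'.mem_iff ?_).2 hx.2⟩ <;> simp
  · intro y hy
    simp only [Finset.coe_product, Set.mem_prod, Finset.coe_filter, Finset.mem_univ, true_and,
      Set.mem_ofPred_eq] at hy
    obtain ⟨x, rfl⟩ := (ZMod.chineseRemainder hc).surjective y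
    refine ⟨x, ?_, rfl⟩
    have e : ZMod.chineseRemainder hc x = ZMod.chineseRemainder hc ((x.val : ℕ)) := by simp
    rw [e, map_natCast] at hy
    simp only [Finset.coe_filter, Finset.mem_univ, true_and, Set.mem_ofPred_eq, Set.mem_inter_iff]
    refine ⟨(h.mem_iff ?_).1 hy.1, (h'.mem_iff ?_).1 hy.2⟩ <;> simp

lemma HasDens.inter {S S' : Set ℤ} {N N' : ℕ} (hN : 0 < N) (hN' : 0 < N')
    (h : Perd S N) (h' : Perd S' N') (hc : Nat.Coprime N N') {d d' : ℝ}
    (hd : HasDens S d) (hd' : HasDens S' d') : HasDens (S ∩ S') (d * d') := by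
  have := Perd.hasDens (Nat.mul_pos hN hN') ((h.mul_right N').inter (h'.mul_left N))
  rw [cnt_inter_coprime hN hN' h h' hc] at this
  rw [hd.unique (h.hasDens hN), hd'.unique (h'.hasDens hN')]
  convert this using 1
  push_cast
  field_simp

lemma perd_class (P : ℕ) (n0 : ℤ) : Perd {n | (P:ℤ) ∣ n - n0} P := by
  intro n k
  simp only [Set.mem_ofPred_eq]
  rw [show n + P * k - n0 = (n - n0) + P * k by ring, dvd_add_left (dvd_mul_right _ _)]

lemma hasDens_class (P : ℕ) (hP : 0 < P) (n0 : ℤ) : HasDens {n | (P:ℤ) ∣ n - n0} (1 / P) := by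
  have : NeZero P := ⟨hP.ne'⟩
  have h := (perd_class P n0).hasDens hP
  rw [cnt_eq_zmod (perd_class P n0)] at h
  convert h
  symm
  norm_cast
  rw [Finset.card_eq_one]
  refine ⟨(n0 : ZMod P), ?_⟩
  ext x
  simp only [Set.mem_ofPred_eq, Finset.mem_filter, Finset.mem_univ, true_and,
    Finset.mem_singleton]
  rw [← ZMod.intCast_eq_intCast_iff_dvd_sub]
  simp [eq_comm]

/-! ### The density `dlt` of a set of multiples and its zero-one law -/

lemma MB_mono {A A' : Set ℕ} (h : A ⊆ A') : MB A ⊆ MB A' :=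
  fun _ ⟨b, hb, hbn⟩ => ⟨b, h hb, hbn⟩

lemma MB_union (A A' : Set ℕ) : MB (A ∪ A') = MB A ∪ MB A' := by
  ext n
  constructor
  · rintro ⟨b, hb | hb, hbn⟩
    · exact Or.inl ⟨b, hb, hbn⟩
    · exact Or.inr ⟨b, hb, hbn⟩
  · rintro (⟨b, hb, hbn⟩ | ⟨b, hb, hbn⟩)
    · exact ⟨b, Or.inl hb, hbn⟩
    · exact ⟨b, Or.inr hb, hbn⟩

lemma perd_MB (T : Finset ℕ) : Perd (MB (T : Set ℕ)) (∏ t ∈ T, t) := by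
  intro n k
  have key : ∀ b ∈ T, ((b:ℤ) ∣ n + ((∏ t ∈ T, t : ℕ) : ℤ) * k ↔ (b:ℤ) ∣ n) := by
    intro b hb
    have h1 : (b:ℤ) ∣ ((∏ t ∈ T, t : ℕ) : ℤ) * k :=
      Dvd.dvd.mul_right (by exact_mod_cast Finset.dvd_prod_of_mem (fun t => t) hb) k
    exact dvd_add_left h1
  constructor
  · rintro ⟨b, hb, h⟩
    exact ⟨b, hb, (key b hb).1 h⟩
  · rintro ⟨b, hb, h⟩
    exact ⟨b, hb, (key b hb).2 h⟩

/-- The density of the set of multiples of a finite set of positive integers, counted over the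
period `∏ T`. -/
def dens (T : Finset ℕ) : ℝ := cnt (MB (T : Set ℕ)) (∏ t ∈ T, t) / ((∏ t ∈ T, t : ℕ) : ℝ)

lemma prod_pos_of {T : Finset ℕ} (h : 0 ∉ T) : 0 < ∏ t ∈ T, t :=
  Finset.prod_pos fun _ ht => Nat.pos_of_ne_zero fun h0 => h (h0 ▸ ht)

lemma hasDens_MB {T : Finset ℕ} (h : 0 ∉ T) : HasDens (MB (T : Set ℕ)) (dens T) :=
  (perd_MB T).hasDens (prod_pos_of h)

lemma dens_nonneg (T : Finset ℕ) : 0 ≤ dens T :=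
  div_nonneg (cnt_nonneg _ _) (Nat.cast_nonneg _)

lemma dens_le_one (T : Finset ℕ) : dens T ≤ 1 :=
  div_le_one_of_le₀ (cnt_le _ _) (Nat.cast_nonneg _)

lemma dens_empty : dens ∅ = 0 := by
  simp [dens, MB, cnt]

/-- The supremum of the densities of the sets of multiples of the finite subsets of `A`, that is,
the Haar measure of the multiples of `A` among the profinite integers. -/
def dlt (A : Set ℕ) : ℝ := sSup {x | ∃ T : Finset ℕ, (T : Set ℕ) ⊆ A ∧ x = dens T}

lemma dlt_bdd (A : Set ℕ) : BddAbove {x | ∃ T : Finset ℕ, (T : Set ℕ) ⊆ A ∧ x = dens T} :=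
  ⟨1, by rintro x ⟨T, _, rfl⟩; exact dens_le_one T⟩

lemma dlt_nonempty (A : Set ℕ) : {x | ∃ T : Finset ℕ, (T : Set ℕ) ⊆ A ∧ x = dens T}.Nonempty :=
  ⟨dens ∅, ∅, by simp, rfl⟩

lemma dens_le_dlt {A : Set ℕ} {T : Finset ℕ} (h : (T : Set ℕ) ⊆ A) : dens T ≤ dlt A :=
  le_csSup (dlt_bdd A) ⟨T, h, rfl⟩

lemma exists_lt_dens {A : Set ℕ} {x : ℝ} (h : x < dlt A) :
    ∃ T : Finset ℕ, (T : Set ℕ) ⊆ A ∧ x < dens T := by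
  obtain ⟨_, ⟨T, hT, rfl⟩, hx⟩ := exists_lt_of_lt_csSup (dlt_nonempty A) h
  exact ⟨T, hT, hx⟩

lemma dlt_le {A : Set ℕ} {x : ℝ} (h : ∀ T : Finset ℕ, (T : Set ℕ) ⊆ A → dens T ≤ x) :
    dlt A ≤ x :=
  csSup_le (dlt_nonempty A) (by rintro _ ⟨T, hT, rfl⟩; exact h T hT)

lemma dlt_le_one (A : Set ℕ) : dlt A ≤ 1 := dlt_le fun T _ => dens_le_one T

lemma dlt_nonneg (A : Set ℕ) : 0 ≤ dlt A :=
  (dens_nonneg ∅).trans (dens_le_dlt (by simp))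

lemma dlt_mono {A A' : Set ℕ} (h : A ⊆ A') : dlt A ≤ dlt A' :=
  dlt_le fun _ hT => dens_le_dlt (hT.trans h)

lemma not_mem_of_subset {A : Set ℕ} (hA : 0 ∉ A) {T : Finset ℕ} (h : (T : Set ℕ) ⊆ A) :
    0 ∉ T := fun h0 => hA (h h0)

lemma prod_coprime {T T' : Finset ℕ} (h : ∀ t ∈ T, ∀ t' ∈ T', Nat.Coprime t t') :
    Nat.Coprime (∏ t ∈ T, t) (∏ t ∈ T', t) :=
  Nat.Coprime.prod_left fun t ht => Nat.Coprime.prod_right fun t' ht' => h t ht t' ht'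

/-- Independence of the multiples of finite sets all of whose elements are mutually coprime. -/
lemma dens_union {T T' : Finset ℕ} (hT : 0 ∉ T) (hT' : 0 ∉ T')
    (h : ∀ t ∈ T, ∀ t' ∈ T', Nat.Coprime t t') :
    1 - dens (T ∪ T') = (1 - dens T) * (1 - dens T') := by
  have h1 := HasDens.inter (prod_pos_of hT) (prod_pos_of hT') (perd_MB T).compl (perd_MB T').compl
    (prod_coprime h) (hasDens_MB hT).compl (hasDens_MB hT').compl
  have h2 : HasDens (MB ((T ∪ T' : Finset ℕ) : Set ℕ)) (dens (T ∪ T')) :=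
    hasDens_MB (by simp [hT, hT'])
  rw [Finset.coe_union, MB_union] at h2
  have h3 := h2.compl
  rw [Set.compl_union] at h3
  exact h3.unique h1

lemma hasDens_class_inter {T : Finset ℕ} (hT : 0 ∉ T) {P : ℕ} (hP : 0 < P) (n0 : ℤ)
    (h : ∀ t ∈ T, Nat.Coprime t P) :
    HasDens ({n | (P:ℤ) ∣ n - n0} ∩ MB (T : Set ℕ)) (1 / P * dens T) :=
  HasDens.inter hP (prod_pos_of hT) (perd_class P n0) (perd_MB T)
    (Nat.Coprime.prod_right fun t ht => (h t ht).symm) (hasDens_class P hP n0) (hasDens_MB hT)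

/-- The elements of `A` without prime factors up to `K`. -/
def rough (A : Set ℕ) (K : ℕ) : Set ℕ := {a ∈ A | a.Coprime K.factorial}

lemma rough_anti (A : Set ℕ) {K K' : ℕ} (h : K ≤ K') : rough A K' ⊆ rough A K :=
  fun _ ha => ⟨ha.1, ha.2.coprime_dvd_right (Nat.factorial_dvd_factorial h)⟩

lemma rough_zero (A : Set ℕ) : rough A 0 = A := by
  ext a; simp [rough]

/-- Zero-one law: either almost every integer is a multiple of an element of `A`, or the
multiples of the rough elements of `A` have arbitrarily small density. -/
lemma zero_one {A : Set ℕ} (hA : 0 ∉ A) (h1 : dlt A ≠ 1) {ε : ℝ} (hε : 0 < ε) :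
    ∃ K, ∀ K' ≥ K, dlt (rough A K') < ε := by
  by_contra hcon
  have hbig : ∀ K, ε ≤ dlt (rough A K) := by
    intro K
    by_contra hK
    push Not at hK
    exact hcon ⟨K, fun K' hK' => (dlt_mono (rough_anti A hK')).trans_lt hK⟩
  set β : ℝ := ⨅ K, dlt (rough A K) with hβ
  have hβε : ε ≤ β := le_ciInf hbig
  have hbdd : BddBelow (Set.range fun K => dlt (rough A K)) :=
    ⟨0, by rintro _ ⟨K, rfl⟩; exact dlt_nonneg _⟩
  have step : ∀ T : Finset ℕ, (T : Set ℕ) ⊆ A → 1 - dlt A ≤ (1 - dens T) * (1 - β) := by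
    intro T hT
    have hT0 := not_mem_of_subset hA hT
    -- beyond the largest element of `T`, rough integers are coprime to all of `T`
    set K' := T.sup id
    have hle : ∀ t ∈ T, t ≤ K' := fun t ht => Finset.le_sup (f := id) ht
    have h2 : ∀ T' : Finset ℕ, (T' : Set ℕ) ⊆ rough A K' →
        1 - dlt A ≤ (1 - dens T) * (1 - dens T') := by
      intro T' hT'
      rw [← dens_union hT0 (not_mem_of_subset hA fun x hx => (hT' hx).1)]
      · have : ((T ∪ T' : Finset ℕ) : Set ℕ) ⊆ A := by
          rw [Finset.coe_union]
          exact Set.union_subset hT fun x hx => (hT' hx).1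
        linarith [dens_le_dlt this]
      · intro t ht t' ht'
        have htpos : 0 < t := Nat.pos_of_ne_zero fun h0 => hT0 (h0 ▸ ht)
        exact ((hT' ht').2.coprime_dvd_right (Nat.dvd_factorial htpos (hle t ht))).symm
    have h3 : 1 - dlt A ≤ (1 - dens T) * (1 - dlt (rough A K')) := by
      by_contra hlt
      push Not at hlt
      have hpos : 0 < 1 - dens T := by
        rcases (sub_nonneg.2 (dens_le_one T)).lt_or_eq with h | h
        · exact h
        · have := h2 ∅ (by simp)
          rw [← h] at this hlt
          linarith
      have : 1 - (1 - dlt A) / (1 - dens T) < dlt (rough A K') := by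
        rw [sub_lt_comm, lt_div_iff₀ hpos]
        linarith
      obtain ⟨T', hT', hlt'⟩ := exists_lt_dens this
      have h4 := h2 T' hT'
      rw [sub_lt_comm, lt_div_iff₀ hpos] at hlt'
      linarith
    have h5 : β ≤ dlt (rough A K') := ciInf_le hbdd K'
    have h6 : 0 ≤ 1 - dens T := sub_nonneg.2 (dens_le_one T)
    nlinarith
  have hβ1 : β ≤ 1 := (ciInf_le hbdd 0).trans (dlt_le_one _)
  rcases hβ1.lt_or_eq with hb | hb
  · have h7 : dlt A ≤ 1 - (1 - dlt A) / (1 - β) := by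
      refine dlt_le fun T hT => ?_
      have := step T hT
      rw [le_sub_comm, div_le_iff₀ (by linarith)]
      exact this
    have hlt : dlt A < 1 := lt_of_le_of_ne (dlt_le_one A) h1
    rw [le_sub_comm, div_le_iff₀ (by linarith)] at h7
    nlinarith
  · have := ciInf_le hbdd 0
    rw [← hβ, hb, rough_zero] at this
    exact h1 (le_antisymm (dlt_le_one A) this)

/-- Restricting to integers congruent to `1` modulo `N` shows that the elements of `A` coprime
to `N` already have all the density. -/
lemma dlt_coprime {A : Set ℕ} (hA : 0 ∉ A) (h1 : dlt A = 1) {N : ℕ} (hN : 0 < N) :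
    dlt {a ∈ A | a.Coprime N} = 1 := by
  refine le_antisymm (dlt_le_one _) (le_of_forall_lt fun x hx => ?_)
  have hN' : (0:ℝ) < N := by exact_mod_cast hN
  obtain ⟨T, hT, hlt⟩ := exists_lt_dens (A := A) (x := 1 - (1 - x) / N)
    (by rw [h1]; have : 0 < (1 - x) / N := div_pos (by linarith) hN'
        linarith)
  set T' := T.filter fun a => a.Coprime N with hT'def
  have hT0 := not_mem_of_subset hA hT
  have hT'0 : 0 ∉ T' := fun h => hT0 (Finset.mem_filter.1 h).1
  have hsub : (T' : Set ℕ) ⊆ {a ∈ A | a.Coprime N} := fun a ha =>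
    ⟨hT (Finset.mem_filter.1 ha).1, (Finset.mem_filter.1 ha).2⟩
  refine lt_of_lt_of_le ?_ (dens_le_dlt hsub)
  have h2 := HasDens.inter hN (prod_pos_of hT'0) (perd_class N 1) (perd_MB T').compl
    (Nat.Coprime.prod_right fun t ht => (Finset.mem_filter.1 ht).2.symm)
    (hasDens_class N hN 1) (hasDens_MB hT'0).compl
  have h3 := h2.mono (hasDens_MB hT0).compl (by
    rintro n ⟨hn1, hn2⟩ ⟨b, hb, hbn⟩
    refine hn2 ⟨b, Finset.mem_coe.2 (Finset.mem_filter.2 ⟨hb, ?_⟩), hbn⟩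
    simp only [Set.mem_ofPred_eq] at hn1
    have hg : ((Nat.gcd b N : ℕ) : ℤ) ∣ 1 := by
      have e1 : ((Nat.gcd b N : ℕ) : ℤ) ∣ n :=
        (Int.natCast_dvd_natCast.2 (Nat.gcd_dvd_left b N)).trans hbn
      have e2 : ((Nat.gcd b N : ℕ) : ℤ) ∣ n - 1 :=
        (Int.natCast_dvd_natCast.2 (Nat.gcd_dvd_right b N)).trans hn1
      have := dvd_sub e1 e2
      simpa using this
    exact Nat.dvd_one.1 (by exact_mod_cast hg))
  have h4 : 1 / (N:ℝ) * (1 - dens T') < (1 - x) / N := lt_of_le_of_lt h3 (by linarith)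
  rw [one_div, inv_mul_eq_div, div_lt_div_iff_of_pos_right hN'] at h4
  linarith

lemma dlt_empty : dlt ∅ = 0 :=
  le_antisymm (dlt_le fun T hT => by
    rw [Set.subset_empty_iff, Finset.coe_eq_empty] at hT
    rw [hT, dens_empty]) (dlt_nonneg _)

lemma exists_coprime_of_dlt {A : Set ℕ} (hA : 0 ∉ A) (h1 : dlt A = 1) {N : ℕ} (hN : 0 < N) :
    ∃ a ∈ A, a.Coprime N := by
  by_contra hcon
  have : {a ∈ A | a.Coprime N} = ∅ := by
    ext a
    simp only [Set.mem_ofPred_eq, Set.mem_empty_iff_false, iff_false]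
    exact fun h => hcon ⟨a, h⟩
  have h2 := dlt_coprime hA h1 hN
  rw [this, dlt_empty] at h2
  norm_num at h2

lemma dlt_diff_singleton {A : Set ℕ} (hA : 0 ∉ A) (h1 : dlt A = 1) {a : ℕ} (ha : 1 < a) :
    dlt (A \ {a}) = 1 := by
  refine le_antisymm (dlt_le_one _) ?_
  rw [← dlt_coprime hA h1 (by omega : 0 < a)]
  refine dlt_mono fun b hb => ⟨hb.1, ?_⟩
  rintro rfl
  have := hb.2
  rw [Nat.coprime_self] at this
  omega

/-- If `dlt A = 1`, the `A`-free integers have natural density zero. -/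
lemma ub_free {A : Set ℕ} (hA : 0 ∉ A) (h1 : dlt A = 1) {ε : ℝ} (hε : 0 < ε) :
    UB (MB A)ᶜ ε := by
  obtain ⟨T, hT, hlt⟩ := exists_lt_dens (A := A) (x := 1 - ε) (by rw [h1]; linarith)
  exact (hasDens_MB (not_mem_of_subset hA hT)).compl.ub.mono
    (Set.compl_subset_compl.2 (MB_mono hT)) (by linarith)

/-! ### The Davenport–Erdős inequality -/

/-- Abel summation: bounded-below partial sums stay bounded below after multiplication by a
decreasing nonnegative weight. -/
lemma abel_finite {f u : ℕ → ℝ} {K : ℝ} (hf : ∀ L, -K ≤ ∑ k ∈ Finset.range L, f k)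
    (hu : Antitone u) (hu0 : ∀ k, 0 ≤ u k) (L : ℕ) :
    -K * u 0 ≤ ∑ k ∈ Finset.range L, f k * u k := by
  have key : ∀ L, (∑ k ∈ Finset.range (L+1), f k) * u L - K * (u 0 - u L)
      ≤ ∑ k ∈ Finset.range (L+1), f k * u k := by
    intro L
    induction L with
    | zero => simp
    | succ L ih =>
      rw [Finset.sum_range_succ _ (L+1), Finset.sum_range_succ _ (L+1)]
      have h1 := hf (L+1)
      have h2 : 0 ≤ u L - u (L+1) := sub_nonneg.2 (hu (Nat.le_succ L))
      nlinarith
  cases L with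
  | zero =>
    have h1 := hf 0
    simp only [Finset.range_zero, Finset.sum_empty] at h1 ⊢
    nlinarith [hu0 0]
  | succ L =>
    refine le_trans ?_ (key L)
    nlinarith [hf (L+1), hu0 L]

lemma abel_tsum {f u : ℕ → ℝ} {K : ℝ} (hf : ∀ L, -K ≤ ∑ k ∈ Finset.range L, f k)
    (hu : Antitone u) (hu0 : ∀ k, 0 ≤ u k) (hs : Summable fun k => f k * u k) :
    -K * u 0 ≤ ∑' k, f k * u k :=
  ge_of_tendsto' hs.hasSum.tendsto_sum_nat (abel_finite hf hu hu0)

/-- The Dirichlet series `∑ n ^ (-s)` over the positive elements `n = k + 1` of `S`. -/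
def Z (S : Set ℤ) (s : ℝ) : ℝ := ∑' k : ℕ, if ((k:ℤ) + 1) ∈ S then ((k:ℝ) + 1) ^ (-s) else 0

lemma summable_succ_rpow {s : ℝ} (hs : 1 < s) : Summable fun k : ℕ => ((k:ℝ) + 1) ^ (-s) := by
  have := (summable_nat_add_iff 1).2 (Real.summable_nat_rpow.2 (by linarith : -s < -1))
  simpa using this

lemma summable_Z (S : Set ℤ) {s : ℝ} (hs : 1 < s) :
    Summable fun k : ℕ => if ((k:ℤ) + 1) ∈ S then ((k:ℝ) + 1) ^ (-s) else 0 := by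
  refine Summable.of_nonneg_of_le (fun k => ?_) (fun k => ?_) (summable_succ_rpow hs)
  · split_ifs <;> positivity
  · split_ifs
    · exact le_rfl
    · positivity

lemma antitone_succ_rpow {s : ℝ} (hs : 0 ≤ s) : Antitone fun k : ℕ => ((k:ℝ) + 1) ^ (-s) := by
  intro a b hab
  have : (a:ℝ) ≤ b := by exact_mod_cast hab
  exact Real.rpow_le_rpow_of_nonpos (by positivity) (by linarith) (by linarith)

lemma Z_univ (s : ℝ) : Z Set.univ s = ∑' k : ℕ, ((k:ℝ) + 1) ^ (-s) := by
  simp [Z]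

lemma Z_add_compl (S : Set ℤ) {s : ℝ} (hs : 1 < s) : Z S s + Z Sᶜ s = Z Set.univ s := by
  rw [Z, Z, ← (summable_Z S hs).tsum_add (summable_Z Sᶜ hs), Z_univ]
  refine tsum_congr fun k => ?_
  by_cases h : ((k:ℤ) + 1) ∈ S <;> simp [h]

lemma Z_sub (S : Set ℤ) (α : ℝ) {s : ℝ} (hs : 1 < s) : Z S s - α * Z Set.univ s =
    ∑' k : ℕ, ((if ((k:ℤ) + 1) ∈ S then (1:ℝ) else 0) - α) * ((k:ℝ) + 1) ^ (-s) := by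
  rw [Z_univ, Z, ← tsum_mul_left, ← (summable_Z S hs).tsum_sub ((summable_succ_rpow hs).mul_left α)]
  refine tsum_congr fun k => ?_
  split_ifs <;> ring

lemma summable_sub (S : Set ℤ) (α : ℝ) {s : ℝ} (hs : 1 < s) :
    Summable fun k : ℕ => ((if ((k:ℤ) + 1) ∈ S then (1:ℝ) else 0) - α) * ((k:ℝ) + 1) ^ (-s) := by
  refine ((summable_Z S hs).sub ((summable_succ_rpow hs).mul_left α)).congr fun k => ?_
  split_ifs <;> ring

lemma Z_ge_of_cnt {S : Set ℤ} {α K : ℝ} (h : ∀ L : ℕ, α * L - K ≤ cnt S L) {s : ℝ} (hs : 1 < s) :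
    α * Z Set.univ s - K ≤ Z S s := by
  have h1 := abel_tsum (f := fun k : ℕ => (if ((k:ℤ) + 1) ∈ S then (1:ℝ) else 0) - α)
    (u := fun k : ℕ => ((k:ℝ) + 1) ^ (-s)) (K := K) (fun L => by
      rw [Finset.sum_sub_distrib, ← cnt_eq_range]
      simp only [Finset.sum_const, Finset.card_range, nsmul_eq_mul]
      linarith [h L]) (antitone_succ_rpow (by linarith)) (fun k => by positivity)
      (summable_sub S α hs)
  rw [← Z_sub S α hs] at h1
  simp at h1
  linarith

lemma Z_ge_of_log {S : Set ℤ} {α K : ℝ} (h : ∀ L : ℕ, α * (∑ k ∈ Finset.range L, ((k:ℝ)+1)⁻¹) - K ≤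
      ∑ k ∈ Finset.range L, if ((k:ℤ) + 1) ∈ S then ((k:ℝ)+1)⁻¹ else 0) {s : ℝ} (hs : 1 < s) :
    α * Z Set.univ s - K ≤ Z S s := by
  have hmul : ∀ k : ℕ, (((if ((k:ℤ) + 1) ∈ S then (1:ℝ) else 0) - α) * ((k:ℝ)+1)⁻¹) *
      ((k:ℝ) + 1) ^ (-(s-1)) =
      ((if ((k:ℤ) + 1) ∈ S then (1:ℝ) else 0) - α) * ((k:ℝ) + 1) ^ (-s) := by
    intro k
    rw [mul_assoc, ← Real.rpow_neg_one, ← Real.rpow_add (by positivity)]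
    congr 2; ring
  have h1 := abel_tsum
    (f := fun k : ℕ => ((if ((k:ℤ) + 1) ∈ S then (1:ℝ) else 0) - α) * ((k:ℝ)+1)⁻¹)
    (u := fun k : ℕ => ((k:ℝ) + 1) ^ (-(s-1))) (K := K) (fun L => by
      have e : ∑ k ∈ Finset.range L,
          ((if ((k:ℤ) + 1) ∈ S then (1:ℝ) else 0) - α) * ((k:ℝ)+1)⁻¹ =
          (∑ k ∈ Finset.range L, if ((k:ℤ) + 1) ∈ S then ((k:ℝ)+1)⁻¹ else 0) -
            α * (∑ k ∈ Finset.range L, ((k:ℝ)+1)⁻¹) := by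
        rw [Finset.mul_sum, ← Finset.sum_sub_distrib]
        refine Finset.sum_congr rfl fun k _ => ?_
        split_ifs <;> ring
      rw [e]
      linarith [h L]) (antitone_succ_rpow (by linarith)) (fun k => by positivity)
      ((summable_sub S α hs).congr fun k => (hmul k).symm)
  simp only [hmul] at h1
  rw [← Z_sub S α hs] at h1
  simp at h1
  linarith

/-- The zeta function tends to infinity at `1`. -/
lemma exists_zeta_large (M : ℝ) : ∃ s0 > 1, ∀ s, 1 < s → s < s0 → M < Z Set.univ s := by
  have h1 : Tendsto (fun N : ℕ => ∑ k ∈ Finset.range N, ((k:ℝ)+1)⁻¹) atTop atTop := by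
    simpa using Real.tendsto_sum_range_one_div_nat_succ_atTop
  obtain ⟨N, hN⟩ := (h1.eventually_gt_atTop M).exists
  have h2 : ContinuousAt (fun s : ℝ => ∑ k ∈ Finset.range N, ((k:ℝ)+1) ^ (-s)) 1 := by
    refine tendsto_finsetSum _ fun k _ => ?_
    exact ContinuousAt.rpow continuousAt_const continuousAt_id.neg
      (Or.inl (by positivity))
  have h3 : ∀ᶠ s in 𝓝 (1:ℝ), M < ∑ k ∈ Finset.range N, ((k:ℝ)+1) ^ (-s) := by
    refine h2.eventually (lt_mem_nhds ?_)
    simpa [Real.rpow_neg_one] using hN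
  obtain ⟨ε, hε, hball⟩ := Metric.eventually_nhds_iff.1 h3
  refine ⟨1 + ε, by linarith, fun s hs1 hs2 => ?_⟩
  have := hball (y := s) (by rw [Real.dist_eq, abs_lt]; constructor <;> linarith)
  refine this.trans_le ?_
  rw [Z_univ]
  exact (summable_succ_rpow hs1).sum_le_tsum _ fun k _ => by positivity

/-- The arithmetic function `n ↦ n ^ ε`. -/
def powF (ε : ℝ) : ArithmeticFunction ℝ := ⟨fun n => if n = 0 then 0 else (n:ℝ) ^ ε, by simp⟩

lemma powF_mult (ε : ℝ) : (powF ε).IsMultiplicative := by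
  refine ArithmeticFunction.IsMultiplicative.iff_ne_zero.2 ⟨by simp [powF], ?_⟩
  intro m n hm hn _
  simp only [powF, ArithmeticFunction.coe_mk, mul_eq_zero, hm, hn, or_self, if_false, Nat.cast_mul]
  exact Real.mul_rpow (Nat.cast_nonneg _) (Nat.cast_nonneg _)

/-- Jordan's totient function with a real exponent, `∑ l ∣ n, jordan ε l = n ^ ε`. -/
def jordan (ε : ℝ) : ArithmeticFunction ℝ :=
  ((ArithmeticFunction.moebius : ArithmeticFunction ℤ) : ArithmeticFunction ℝ) * powF ε

lemma sum_jordan (ε : ℝ) {n : ℕ} (hn : n ≠ 0) :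
    ∑ l ∈ n.divisors, jordan ε l = (n:ℝ) ^ ε := by
  rw [← ArithmeticFunction.coe_zeta_mul_apply, jordan, ← mul_assoc,
    ArithmeticFunction.coe_zeta_mul_coe_moebius, one_mul]
  simp [powF, hn]

lemma jordan_nonneg {ε : ℝ} (hε : 0 ≤ ε) (n : ℕ) : 0 ≤ jordan ε n := by
  rcases eq_or_ne n 0 with rfl | hn
  · simp
  have hm : (jordan ε).IsMultiplicative :=
    ArithmeticFunction.isMultiplicative_moebius.intCast.mul (powF_mult ε)
  rw [ArithmeticFunction.IsMultiplicative.multiplicative_factorization _ hm hn]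
  refine Finset.prod_nonneg fun p hp => ?_
  have hpp : p.Prime := Nat.prime_of_mem_primeFactors (by simpa using hp)
  dsimp only
  cases h : n.factorization p with
  | zero => rw [pow_zero, hm.1]; exact zero_le_one
  | succ k =>
    have h1 := sum_jordan ε (pow_ne_zero (k+1) hpp.ne_zero)
    have h2 := sum_jordan ε (pow_ne_zero k hpp.ne_zero)
    rw [Nat.sum_divisors_prime_pow hpp] at h1 h2
    rw [Finset.sum_range_succ, h2] at h1
    have h3 : ((p ^ k : ℕ) : ℝ) ^ ε ≤ ((p ^ (k+1) : ℕ) : ℝ) ^ ε :=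
      Real.rpow_le_rpow (Nat.cast_nonneg _)
        (by exact_mod_cast Nat.pow_le_pow_right hpp.pos (Nat.le_succ k)) hε
    linarith

lemma ofReal_Z (S : Set ℤ) {s : ℝ} (hs : 1 < s) : ENNReal.ofReal (Z S s) =
    ∑' n : ℕ+, if ((n:ℕ):ℤ) ∈ S then ENNReal.ofReal (((n:ℕ):ℝ) ^ (-s)) else 0 := by
  rw [Z, ENNReal.ofReal_tsum_of_nonneg (fun k => by split_ifs <;> positivity) (summable_Z S hs),
    tsum_pnat_eq_tsum_succ (f := fun n : ℕ => if (n:ℤ) ∈ S then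
      ENNReal.ofReal ((n:ℝ) ^ (-s)) else 0)]
  refine tsum_congr fun k => ?_
  push_cast
  split_ifs <;> simp

/-- The weights `n ^ (-s')` are the Dirichlet convolution of the weights `n ^ (-s)` with a
nonnegative function. -/
lemma rpow_conv {s s' : ℝ} (hss : s' ≤ s) (n : ℕ+) :
    ENNReal.ofReal (((n:ℕ):ℝ) ^ (-s')) = ∑ p ∈ (n:ℕ).divisorsAntidiagonal,
      ENNReal.ofReal ((p.1:ℝ) ^ (-s)) *
        ENNReal.ofReal ((p.2:ℝ) ^ (-s) * jordan (s - s') p.2) := by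
  have hJ := fun l => jordan_nonneg (sub_nonneg.2 hss) l
  have h1 : ∀ p ∈ (n:ℕ).divisorsAntidiagonal, ENNReal.ofReal ((p.1:ℝ) ^ (-s)) *
        ENNReal.ofReal ((p.2:ℝ) ^ (-s) * jordan (s - s') p.2) =
        ENNReal.ofReal (((n:ℕ):ℝ) ^ (-s) * jordan (s-s') p.2) := by
    intro p hp
    rw [← ENNReal.ofReal_mul (by positivity), ← mul_assoc,
      ← Real.mul_rpow (Nat.cast_nonneg _) (Nat.cast_nonneg _), ← Nat.cast_mul,
      (Nat.mem_divisorsAntidiagonal.1 hp).1]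
  rw [Finset.sum_congr rfl h1, ← ENNReal.ofReal_sum_of_nonneg
    (fun p _ => mul_nonneg (by positivity) (hJ _)), ← Finset.mul_sum,
    Nat.sum_divisorsAntidiagonal' (fun _ y => jordan (s-s') y), sum_jordan _ n.ne_zero,
    ← Real.rpow_add (by exact_mod_cast n.pos)]
  congr 2
  ring

lemma tsum_conv {s s' : ℝ} (hss : s' ≤ s) (S : Set ℤ) :
    ∑' n : ℕ+, (if ((n:ℕ):ℤ) ∈ S then ENNReal.ofReal (((n:ℕ):ℝ) ^ (-s')) else 0) =
    ∑' (k : ℕ+) (l : ℕ+), if (((k:ℕ):ℤ) * ((l:ℕ):ℤ)) ∈ S then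
      ENNReal.ofReal (((k:ℕ):ℝ) ^ (-s)) *
        ENNReal.ofReal (((l:ℕ):ℝ) ^ (-s) * jordan (s - s') l) else 0 := by
  rw [← ENNReal.tsum_prod (f := fun k l : ℕ+ => if (((k:ℕ):ℤ) * ((l:ℕ):ℤ)) ∈ S then
      ENNReal.ofReal (((k:ℕ):ℝ) ^ (-s)) *
        ENNReal.ofReal (((l:ℕ):ℝ) ^ (-s) * jordan (s - s') l) else 0),
    ← sigmaAntidiagonalEquivProd.tsum_eq, ENNReal.tsum_sigma']
  refine tsum_congr fun n => ?_
  have h2 : ∀ p : (n:ℕ).divisorsAntidiagonal,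
      (((sigmaAntidiagonalEquivProd ⟨n, p⟩).1 : ℕ+) : ℕ) = p.1.1 ∧
      (((sigmaAntidiagonalEquivProd ⟨n, p⟩).2 : ℕ+) : ℕ) = p.1.2 := fun p => ⟨rfl, rfl⟩
  simp only [h2]
  have h3 : ∀ p : (n:ℕ).divisorsAntidiagonal, ((p.1.1 : ℕ) : ℤ) * ((p.1.2 : ℕ) : ℤ) = ((n:ℕ):ℤ) := by
    intro p
    exact_mod_cast (Nat.mem_divisorsAntidiagonal.1 p.2).1
  simp only [h3]
  split_ifs with h
  · rw [rpow_conv hss n, ← Finset.tsum_subtype]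
  · simp

/-- For a set closed under multiples, the probability with respect to the zeta distribution
increases as the parameter decreases. -/
lemma Z_monotone {S : Set ℤ} (hS : ∀ n ∈ S, ∀ k : ℤ, n * k ∈ S) {s s' : ℝ} (hs' : 1 < s')
    (hss : s' ≤ s) : Z S s * Z Set.univ s' ≤ Z S s' * Z Set.univ s := by
  have hs : 1 < s := hs'.trans_le hss
  have hnn : ∀ (A : Set ℤ) (t : ℝ), 0 ≤ Z A t := fun A t =>
    tsum_nonneg fun k => by split_ifs <;> positivity
  rw [← ENNReal.ofReal_le_ofReal_iff (mul_nonneg (hnn _ _) (hnn _ _)),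
    ENNReal.ofReal_mul (hnn _ _), ENNReal.ofReal_mul (hnn _ _)]
  set H : ENNReal := ∑' l : ℕ+, ENNReal.ofReal (((l:ℕ):ℝ) ^ (-s) * jordan (s - s') l) with hH
  have h1 : ENNReal.ofReal (Z Set.univ s') = ENNReal.ofReal (Z Set.univ s) * H := by
    rw [ofReal_Z _ hs', tsum_conv hss, ofReal_Z _ hs, ← ENNReal.tsum_mul_right]
    simp only [Set.mem_univ, if_true, ENNReal.tsum_mul_left, hH]
  have h2 : ENNReal.ofReal (Z S s) * H ≤ ENNReal.ofReal (Z S s') := by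
    rw [ofReal_Z _ hs', tsum_conv hss, ofReal_Z _ hs, ← ENNReal.tsum_mul_right]
    refine ENNReal.tsum_le_tsum fun k => ?_
    rw [hH, ← ENNReal.tsum_mul_left]
    refine ENNReal.tsum_le_tsum fun l => ?_
    by_cases hk : ((k:ℕ):ℤ) ∈ S
    · rw [if_pos hk, if_pos (hS _ hk _)]
    · rw [if_neg hk, zero_mul]; exact bot_le
  rw [h1, mul_left_comm, mul_comm]
  gcongr

lemma MB_mul {A : Set ℕ} {n : ℤ} (h : n ∈ MB A) (k : ℤ) : n * k ∈ MB A := by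
  obtain ⟨b, hb, hbn⟩ := h
  exact ⟨b, hb, hbn.mul_right k⟩

/-- The Davenport–Erdős inequality in terms of Dirichlet series. -/
lemma dlt_ge_of_Z {A : Set ℕ} (hA : 0 ∉ A) {α : ℝ}
    (h : ∀ ε > 0, ∃ K, ∀ s > 1, (α - ε) * Z Set.univ s - K ≤ Z (MB A) s) : α ≤ dlt A := by
  refine le_of_forall_pos_le_add fun ε hε => ?_
  obtain ⟨K, hK⟩ := h (ε / 4) (by linarith)
  obtain ⟨s0, hs0, hbig⟩ := exists_zeta_large (max 1 (4 * K / ε))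
  set s := (1 + s0) / 2 with hs
  have hs1 : 1 < s := by rw [hs]; linarith
  have hz := hbig s hs1 (by rw [hs]; linarith)
  have hz1 := (le_max_left _ _).trans_lt hz
  have hz2 := (le_max_right _ _).trans_lt hz
  rw [div_lt_iff₀ hε] at hz2
  have hzA := hK s hs1
  -- finitely many elements of `A` carry almost all of the series at `s`
  obtain ⟨N, hN⟩ : ∃ N, Z (MB A) s - ε / 4 <
      ∑ k ∈ Finset.range N, if ((k:ℤ) + 1) ∈ MB A then ((k:ℝ) + 1) ^ (-s) else 0 :=
    ((summable_Z (MB A) hs1).hasSum.tendsto_sum_nat.eventually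
      (lt_mem_nhds (by unfold Z; linarith))).exists
  set T := (Finset.range (N+1)).filter (· ∈ A) with hT
  have hTA : (T : Set ℕ) ⊆ A := fun t ht => (Finset.mem_filter.1 ht).2
  have hT0 := not_mem_of_subset hA hTA
  have hNT : ∑ k ∈ Finset.range N, (if ((k:ℤ) + 1) ∈ MB A then ((k:ℝ) + 1) ^ (-s) else 0)
      ≤ Z (MB (T : Set ℕ)) s := by
    refine le_trans (Finset.sum_le_sum fun k hk => ?_)
      ((summable_Z (MB (T : Set ℕ)) hs1).sum_le_tsum (Finset.range N)
        fun k _ => by split_ifs <;> positivity)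
    by_cases hkA : ((k:ℤ) + 1) ∈ MB A
    · rw [if_pos hkA, if_pos]
      obtain ⟨b, hb, hbk⟩ := hkA
      refine ⟨b, Finset.mem_coe.2 (Finset.mem_filter.2 ⟨?_, hb⟩), hbk⟩
      have : b ≤ k + 1 := Nat.le_of_dvd (by omega) (by exact_mod_cast hbk)
      rw [Finset.mem_range] at hk ⊢
      omega
    · rw [if_neg hkA]
      split_ifs <;> positivity
  have hTs : (α - 3 * ε / 4) * Z Set.univ s ≤ Z (MB (T : Set ℕ)) s := by nlinarith
  obtain ⟨KT, hKT⟩ := (hasDens_MB hT0).compl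
  obtain ⟨s0', hs0', hbig'⟩ := exists_zeta_large (max 1 (4 * KT / ε))
  set s' := (1 + min s s0') / 2 with hs'
  have hm1 : 1 < min s s0' := lt_min hs1 hs0'
  have hs'1 : 1 < s' := by rw [hs']; linarith
  have hs'm : s' < min s s0' := by rw [hs']; linarith
  have hy := hbig' s' hs'1 (hs'm.trans_le (min_le_right _ _))
  have hy1 := (le_max_left _ _).trans_lt hy
  have hy2 := (le_max_right _ _).trans_lt hy
  rw [div_lt_iff₀ hε] at hy2
  have hmono := Z_monotone (S := MB (T : Set ℕ)) (fun n hn k => MB_mul hn k) hs'1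
    (hs'm.le.trans (min_le_left _ _))
  have hF := Z_ge_of_cnt (fun L => by linarith [(abs_le.1 (hKT L)).1] :
    ∀ L : ℕ, (1 - dens T) * L - KT ≤ cnt (MB (T : Set ℕ))ᶜ L) hs'1
  have hadd := Z_add_compl (MB (T : Set ℕ)) hs'1
  have hfin : (α - 3 * ε / 4) * Z Set.univ s' ≤ Z (MB (T : Set ℕ)) s' := by
    have : (α - 3 * ε / 4) * Z Set.univ s' * Z Set.univ s ≤
        Z (MB (T : Set ℕ)) s' * Z Set.univ s := by
      refine le_trans ?_ hmono
      have := mul_le_mul_of_nonneg_right hTs (by linarith : 0 ≤ Z Set.univ s')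
      linarith
    exact le_of_mul_le_mul_right this (by linarith)
  have hd : (α - 3 * ε / 4) * Z Set.univ s' ≤ (dens T + ε / 4) * Z Set.univ s' := by linarith
  have := le_of_mul_le_mul_right hd (by linarith)
  linarith [dens_le_dlt hTA]

lemma lower_eventually {S : Set ℤ} {α ε : ℝ}
    (h : ∀ᶠ L : ℕ in atTop, α - ε < cnt S L / L) : ∃ K, ∀ L : ℕ, (α - ε) * L - K ≤ cnt S L := by
  obtain ⟨L0, hL0⟩ := eventually_atTop.1 h
  refine ⟨|α - ε| * L0, fun L => ?_⟩
  rcases le_or_gt L0 L with hL | hL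
  · rcases Nat.eq_zero_or_pos L with rfl | hpos
    · have := cnt_nonneg S 0
      have : 0 ≤ |α - ε| * L0 := by positivity
      simp; linarith [cnt_nonneg S 0]
    · have h1 := hL0 L hL
      rw [lt_div_iff₀ (by exact_mod_cast hpos)] at h1
      have : 0 ≤ |α - ε| * L0 := by positivity
      linarith
  · have h1 := cnt_nonneg S L
    have h2 : (α - ε) * L ≤ |α - ε| * L0 := by
      have : (L:ℝ) ≤ L0 := by exact_mod_cast hL.le
      have h3 := le_abs_self (α - ε)
      have : (0:ℝ) ≤ L := Nat.cast_nonneg _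
      nlinarith [abs_nonneg (α - ε)]
    linarith

lemma bdd_cnt (S : Set ℤ) (L : ℕ) : 0 ≤ cnt S L / L ∧ cnt S L / L ≤ 1 :=
  ⟨div_nonneg (cnt_nonneg _ _) (Nat.cast_nonneg _), div_le_one_of_le₀ (cnt_le _ _) (Nat.cast_nonneg _)⟩

lemma eventually_lower (S : Set ℤ) {ε : ℝ} (hε : 0 < ε) :
    ∀ᶠ L : ℕ in atTop, lowerDensity S - ε < cnt S L / L :=
  eventually_lt_of_lt_liminf (by unfold lowerDensity; linarith)
    (isBoundedUnder_of ⟨0, fun L => (bdd_cnt S L).1⟩)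

/-- Davenport–Erdős: the lower density of a set of multiples is attained by finite subsets. -/
lemma lowerDensity_le_dlt {A : Set ℕ} (hA : 0 ∉ A) : lowerDensity (MB A) ≤ dlt A := by
  refine dlt_ge_of_Z hA fun ε hε => ?_
  obtain ⟨K, hK⟩ := lower_eventually (eventually_lower (MB A) hε)
  exact ⟨K, fun s hs => Z_ge_of_cnt hK hs⟩

lemma logSum_eq (S : Set ℤ) (L : ℕ) :
    (∑ n ∈ Finset.Icc (1:ℤ) (L:ℤ), if n ∈ S then (n:ℝ)⁻¹ else 0) =
    ∑ k ∈ Finset.range L, if ((k:ℤ) + 1) ∈ S then ((k:ℝ)+1)⁻¹ else 0 := by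
  rw [sum_Icc_int (fun n : ℤ => if n ∈ S then (n:ℝ)⁻¹ else 0)]
  push_cast
  rfl

lemma sum_inv_le (L : ℕ) : ∑ k ∈ Finset.range L, ((k:ℝ)+1)⁻¹ ≤ 1 + Real.log L := by
  have := harmonic_le_one_add_log L
  rw [harmonic] at this
  push_cast at this
  exact this

/-- A set whose multiples have logarithmic density one has finite subsets whose multiples have
density arbitrarily close to one. -/
lemma dlt_of_behrend {A : Set ℕ} (h : Behrend A) : dlt A = 1 := by
  have hA : 0 ∉ A := fun h0 => lt_irrefl 0 (h.1 0 h0)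
  refine le_antisymm (dlt_le_one A) (dlt_ge_of_Z hA fun ε hε => ?_)
  have h1 : ∀ᶠ L : ℕ in atTop, 1 - min ε 1 <
      (∑ n ∈ Finset.Icc (1:ℤ) (L:ℤ), if n ∈ MB A then (n:ℝ)⁻¹ else 0) / Real.log L :=
    h.2.eventually (lt_mem_nhds (by have : 0 < min ε 1 := lt_min hε one_pos
                                    linarith))
  obtain ⟨L0, hL0⟩ := eventually_atTop.1 h1
  have hα0 : 0 ≤ 1 - min ε 1 := by linarith [min_le_right ε 1]
  have hα1 : 1 - min ε 1 ≤ 1 := by linarith [lt_min hε one_pos]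
  have hζ : ∀ s > 1, 0 ≤ Z Set.univ s := fun s hs => by
    rw [Z_univ]; exact tsum_nonneg fun k => by positivity
  refine ⟨1 + L0, fun s hs => ?_⟩
  have h2 : (1 - min ε 1) * Z Set.univ s - (1 + L0) ≤ Z (MB A) s := by
    refine Z_ge_of_log (fun L => ?_) hs
    have hnn : 0 ≤ ∑ k ∈ Finset.range L, if ((k:ℤ) + 1) ∈ MB A then ((k:ℝ)+1)⁻¹ else 0 :=
      Finset.sum_nonneg fun k _ => by split_ifs <;> positivity
    have hH : 0 ≤ ∑ k ∈ Finset.range L, ((k:ℝ)+1)⁻¹ := Finset.sum_nonneg fun k _ => by positivity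
    rcases le_or_gt (max L0 2) L with hL | hL
    · have h3 := hL0 L ((le_max_left _ _).trans hL)
      have hlog : 0 < Real.log L := Real.log_pos (by
        exact_mod_cast lt_of_lt_of_le (by norm_num) ((le_max_right L0 2).trans hL))
      rw [lt_div_iff₀ hlog, logSum_eq] at h3
      have h4 := sum_inv_le L
      have h5 : (0:ℝ) ≤ L0 := Nat.cast_nonneg _
      nlinarith
    · -- for small `L` the harmonic sum itself is at most `L`
      have h5 : ∑ k ∈ Finset.range L, ((k:ℝ)+1)⁻¹ ≤ L := by
        calc ∑ k ∈ Finset.range L, ((k:ℝ)+1)⁻¹ ≤ ∑ k ∈ Finset.range L, (1:ℝ) :=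
              Finset.sum_le_sum fun k _ => inv_le_one_of_one_le₀ (by
                have : (0:ℝ) ≤ k := Nat.cast_nonneg _
                linarith)
          _ = L := by simp
      have h6 : (L:ℝ) ≤ 1 + L0 := by
        have : L ≤ 1 + L0 := by
          rcases max_cases L0 2 with h | h <;> omega
        exact_mod_cast this
      nlinarith
  have := hζ s hs
  have : (1 - ε) * Z Set.univ s ≤ (1 - min ε 1) * Z Set.univ s :=
    mul_le_mul_of_nonneg_right (by linarith [min_le_left ε 1]) this
  linarith

/-! ### Tautness and almost-free residue classes -/

/-- Tautness excludes rescaled copies of sets with density-one multiples: removing one element of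
such a copy would not change the logarithmic density. -/
lemma taut_dlt {C : Set ℕ} (hC : Taut C) {d : ℕ} (hd : 0 < d) :
    dlt {a | 1 < a ∧ d * a ∈ C} ≠ 1 := by
  intro h1
  set A := {a | 1 < a ∧ d * a ∈ C} with hAdef
  have hA : 0 ∉ A := fun h => by
    have := h.1
    omega
  obtain ⟨a, ha, -⟩ := exists_coprime_of_dlt hA h1 one_pos
  have h1' := dlt_diff_singleton hA h1 ha.1
  obtain ⟨d1, d2, l1, l2, hlt⟩ := hC (d * a) ha.2
  have hsub : MB C \ MB (C \ {d * a}) ⊆ {x | ∃ k ∈ (MB (A \ {a}))ᶜ, x = d * k} := by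
    rintro x ⟨⟨c, hc, hcx⟩, hx⟩
    have hca : c = d * a := by
      by_contra hne
      exact hx ⟨c, ⟨hc, hne⟩, hcx⟩
    subst hca
    obtain ⟨j, rfl⟩ := hcx
    refine ⟨a * j, ?_, by push_cast; ring⟩
    rintro ⟨b, ⟨hb, hba⟩, hbj⟩
    refine hx ⟨d * b, ⟨hb.2, fun h => hba (Nat.eq_of_mul_eq_mul_left hd h)⟩, ?_⟩
    push_cast
    rw [mul_assoc]
    exact mul_dvd_mul_left _ hbj
  have hA' : 0 ∉ A \ {a} := fun h => hA h.1
  set ε := (d2 - d1) / 2 with hεdef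
  have hε : 0 < ε := by rw [hεdef]; linarith
  obtain ⟨K, hK⟩ := ((ub_free hA' h1' hε).dilate d hd).mono hsub le_rfl
  have hmono : MB (C \ {d * a}) ⊆ MB C := MB_mono Set.sdiff_subset
  have hbound : ∀ L : ℕ,
      (∑ n ∈ Finset.Icc (1:ℤ) (L:ℤ), if n ∈ MB C then (n:ℝ)⁻¹ else 0) -
      (∑ n ∈ Finset.Icc (1:ℤ) (L:ℤ), if n ∈ MB (C \ {d * a}) then (n:ℝ)⁻¹ else 0)
        ≤ ε * (1 + Real.log L) + K := by
    intro L
    have h := abel_finite (K := K)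
      (f := fun k : ℕ => ε - if ((k:ℤ) + 1) ∈ MB C \ MB (C \ {d * a}) then (1:ℝ) else 0)
      (u := fun k : ℕ => ((k:ℝ) + 1)⁻¹) (fun L => by
        have := hK L
        rw [cnt_eq_range] at this
        rw [Finset.sum_sub_distrib]
        simp only [Finset.sum_const, Finset.card_range, nsmul_eq_mul]
        have e0 : (∑ k ∈ Finset.range L, if ((k:ℤ) + 1) ∈ MB C \ MB (C \ {d * a}) then (1:ℝ) else 0)
            ≤ ε * L + K := by convert this
        linarith)
      (fun x y hxy => by
        have : (x:ℝ) ≤ y := by exact_mod_cast hxy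
        exact inv_anti₀ (by positivity) (by linarith))
      (fun k => by positivity) L
    have e1 : ∀ k : ℕ, (ε - if ((k:ℤ) + 1) ∈ MB C \ MB (C \ {d * a}) then (1:ℝ) else 0) *
        ((k:ℝ) + 1)⁻¹ = ε * ((k:ℝ) + 1)⁻¹ - ((if ((k:ℤ) + 1) ∈ MB C then ((k:ℝ)+1)⁻¹ else 0) -
          (if ((k:ℤ) + 1) ∈ MB (C \ {d * a}) then ((k:ℝ)+1)⁻¹ else 0)) := by
      intro k
      by_cases ha1 : ((k:ℤ) + 1) ∈ MB (C \ {d * a})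
      · simp [ha1, hmono ha1]
      · by_cases ha2 : ((k:ℤ) + 1) ∈ MB C <;> simp [ha1, ha2, sub_mul]
    simp only [e1] at h
    rw [Finset.sum_sub_distrib, Finset.sum_sub_distrib, ← Finset.mul_sum, ← logSum_eq,
      ← logSum_eq] at h
    have h3 := mul_le_mul_of_nonneg_left (sum_inv_le L) hε.le
    simp only [Nat.cast_zero, zero_add, inv_one, mul_one] at h
    linarith
  have hlog : Tendsto (fun L : ℕ => Real.log L) atTop atTop :=
    Real.tendsto_log_atTop.comp tendsto_natCast_atTop_atTop
  have hlim : Tendsto (fun L : ℕ => ε + (ε + K) / Real.log L) atTop (𝓝 (ε + 0)) :=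
    tendsto_const_nhds.add (hlog.const_div_atTop (ε + K))
  have hle : d2 - d1 ≤ ε + 0 := by
    refine le_of_tendsto_of_tendsto (l2.sub l1) hlim ?_
    filter_upwards [hlog.eventually_gt_atTop 0] with L hL
    rw [← sub_div, div_le_iff₀ hL, add_mul, div_mul_cancel₀ _ hL.ne']
    linarith [hbound L]
  rw [hεdef] at hle
  linarith

lemma exists_realizes (S : Set ℤ) : ∃ ℓ : ℕ → ℕ, RealizesLowerDensity S ℓ := by
  have hfreq : ∀ n : ℕ, ∃ᶠ L in atTop, |cnt S L / L - lowerDensity S| < 1 / ((n:ℝ) + 1) := by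
    intro n
    have hpos : (0:ℝ) < 1 / ((n:ℝ) + 1) := by positivity
    have h1 : ∃ᶠ L : ℕ in atTop, cnt S L / L < lowerDensity S + 1 / ((n:ℝ) + 1) :=
      frequently_lt_of_liminf_lt
        (isCoboundedUnder_ge_of_le atTop (fun L => (bdd_cnt S L).2))
        (by unfold lowerDensity; linarith)
    refine (h1.and_eventually (eventually_lower S hpos)).mono fun L hL => ?_
    rw [abs_lt]
    constructor <;> linarith [hL.1, hL.2]
  obtain ⟨φ, hφ, h⟩ := extraction_forall_of_frequently hfreq
  refine ⟨φ, hφ.tendsto_atTop, ?_⟩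
  rw [tendsto_iff_dist_tendsto_zero]
  refine squeeze_zero (fun _ => dist_nonneg) (fun n => ?_) tendsto_one_div_add_atTop_nhds_zero_nat
  rw [Real.dist_eq]
  exact (h n).le

/-- Along a sequence realizing the lower density, the multiples of `C` are approximated in density
by the multiples of finite subsets of `C`. -/
lemma tail_small {C : Set ℕ} (hC0 : 0 ∉ C) {ℓ : ℕ → ℕ} (hℓ : RealizesLowerDensity (MB C) ℓ)
    {ε : ℝ} (hε : 0 < ε) : ∃ T : Finset ℕ, (T : Set ℕ) ⊆ C ∧
      ∀ᶠ i in atTop, cnt (MB C \ MB (T : Set ℕ)) (ℓ i) ≤ ε * ℓ i := by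
  obtain ⟨T, hT, hlt⟩ := exists_lt_dens (A := C) (x := dlt C - ε / 3) (by linarith)
  refine ⟨T, hT, ?_⟩
  obtain ⟨K, hK⟩ := hasDens_MB (not_mem_of_subset hC0 hT)
  have hc : Tendsto (fun i => (ℓ i : ℝ)) atTop atTop := tendsto_natCast_atTop_atTop.comp hℓ.1
  filter_upwards [hℓ.2.eventually_lt_const (show lowerDensity (MB C) < lowerDensity (MB C) + ε / 3
    by linarith), hc.eventually_gt_atTop 0, hc.eventually_ge_atTop (3 * K / ε)] with i h1 h2 h3
  rw [cnt_diff (MB_mono hT)]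
  rw [div_lt_iff₀ h2] at h1
  rw [div_le_iff₀ hε] at h3
  have h4 := (abs_le.1 (hK (ℓ i))).1
  have h5 : lowerDensity (MB C) * ℓ i ≤ dlt C * ℓ i :=
    mul_le_mul_of_nonneg_right (lowerDensity_le_dlt hC0) h2.le
  have h6 : (dlt C - ε / 3) * ℓ i ≤ dens T * ℓ i := mul_le_mul_of_nonneg_right hlt.le h2.le
  nlinarith

/-- If `t` is `C`-free, then most elements of a residue class `n0 + Pℤ` with `gcd (n0, P) = t` are
free of the multiples of finite subsets of `C`, provided `P` is divisible enough. -/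
lemma class_almost_free {C : Set ℕ} (hC : Taut C) (hC0 : 0 ∉ C) {t : ℕ} (htC : (t:ℤ) ∉ MB C)
    {ε : ℝ} (hε : 0 < ε) : ∃ K0 : ℕ, ∀ P : ℕ, 0 < P → t * K0.factorial ∣ P → ∀ n0 : ℤ,
      Int.gcd n0 P = t → ∀ T : Finset ℕ, (T : Set ℕ) ⊆ C →
        UB ({n | (P:ℤ) ∣ n - n0} ∩ MB (T : Set ℕ)) (ε / P) := by
  rcases Nat.eq_zero_or_pos t with rfl | ht
  · refine ⟨0, fun P hP _ n0 hg => ?_⟩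
    have := (Int.gcd_eq_zero_iff.1 hg).2
    omega
  have hcard : (0:ℝ) < t.divisors.card := by
    have : 0 < t.divisors.card := Finset.card_pos.2 ⟨1, by simp [ht.ne']⟩
    exact_mod_cast this
  have hex : ∀ d ∈ t.divisors, ∃ K, ∀ K' ≥ K,
      dlt (rough {a | 1 < a ∧ d * a ∈ C} K') < ε / t.divisors.card := by
    intro d hd
    refine zero_one (fun h => ?_) (taut_dlt hC (Nat.pos_of_mem_divisors hd)) (by positivity)
    have := h.1
    omega
  choose! K hK using hex
  refine ⟨t + ∑ d ∈ t.divisors, K d, fun P hP hdvd n0 hg T hT => ?_⟩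
  set K0 := t + ∑ d ∈ t.divisors, K d with hK0
  have hP' : (0:ℝ) < P := by exact_mod_cast hP
  let Td : ℕ → Finset ℕ := fun d => (Finset.range (T.sup id + 1)).filter fun a =>
    d * a ∈ T ∧ 1 < a ∧ a.Coprime K0.factorial ∧ a.Coprime P
  have hTd0 : ∀ d, 0 ∉ Td d := fun d h => by
    have := (Finset.mem_filter.1 h).2.2.1
    omega
  have hU : UB (⋃ d ∈ t.divisors, ({n | (P:ℤ) ∣ n - n0} ∩ MB (Td d : Set ℕ)))
      (∑ d ∈ t.divisors, 1 / P * (ε / t.divisors.card)) := by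
    refine UB.biUnion _ fun d hd => ?_
    refine (hasDens_class_inter (hTd0 d) hP n0 fun a ha =>
      (Finset.mem_filter.1 ha).2.2.2.2).ub.mono subset_rfl ?_
    refine mul_le_mul_of_nonneg_left ?_ (by positivity)
    refine le_trans (dens_le_dlt (A := rough {a | 1 < a ∧ d * a ∈ C} K0) ?_) (hK d hd K0 ?_).le
    · intro a ha
      have ha := (Finset.mem_filter.1 ha).2
      exact ⟨⟨ha.2.1, hT ha.1⟩, ha.2.2.1⟩
    · have := Finset.single_le_sum (f := K) (fun _ _ => Nat.zero_le _) hd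
      omega
  refine hU.mono ?_ ?_
  · rintro n ⟨hn, c, hc, hcn⟩
    have hc0 : 0 < c := Nat.pos_of_ne_zero fun h => hC0 (h ▸ hT hc)
    have hcC := hT hc
    have hc' : c ∈ T := hc
    set d := Nat.gcd c t with hd
    have hd0 : 0 < d := Nat.gcd_pos_of_pos_right _ ht
    obtain ⟨a, ha⟩ : d ∣ c := Nat.gcd_dvd_left c t
    have hdt : d ∣ t := Nat.gcd_dvd_right c t
    have ha0 : 0 < a := Nat.pos_of_ne_zero fun h => by rw [h] at ha; omega
    have ha1 : 1 < a := by
      by_contra h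
      have ha' : a = 1 := by omega
      rw [ha', mul_one] at ha
      exact htC ⟨c, hcC, by exact_mod_cast ha ▸ hdt⟩
    -- a number dividing `n` and `P` divides `gcd (n0, P) = t`
    have hgcd : ∀ x : ℕ, (x:ℤ) ∣ n → x ∣ P → x ∣ t := by
      intro x hx hxP
      have hxP' : (x:ℤ) ∣ P := by exact_mod_cast hxP
      have hx0 : (x:ℤ) ∣ n0 := (dvd_sub_right hx).1 (hxP'.trans hn)
      rw [← hg]
      exact_mod_cast Int.dvd_coe_gcd hx0 hxP'
    have hacn : ∀ x : ℕ, x ∣ c → (x:ℤ) ∣ n := fun x hx =>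
      (show (x:ℤ) ∣ c by exact_mod_cast hx).trans hcn
    have hco : a.Coprime K0.factorial := by
      refine Nat.Coprime.symm (Nat.coprime_of_dvd fun p hp hpK hpa => ?_)
      have h1 : d * p ∣ c := by rw [ha]; exact mul_dvd_mul_left _ hpa
      have h2 : d * p ∣ P := (mul_dvd_mul hdt hpK).trans hdvd
      have h3 : d * p ∣ d := Nat.dvd_gcd h1 (hgcd _ (hacn _ h1) h2)
      have := Nat.le_of_dvd hd0 h3
      have := hp.two_le
      nlinarith
    have hcoP : a.Coprime P := by
      refine Nat.Coprime.symm (Nat.coprime_of_dvd fun p hp hpP hpa => ?_)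
      have h1 : p ∣ t := hgcd p (hacn p (hpa.trans (ha ▸ Dvd.intro_left d rfl))) hpP
      have h2 : p ∣ K0.factorial := hp.dvd_factorial.2 ((Nat.le_of_dvd ht h1).trans (by omega))
      exact hp.one_lt.ne' (Nat.dvd_one.1 (hco ▸ Nat.dvd_gcd hpa h2))
    refine Set.mem_biUnion (x := d) (by simp [hdt, ht.ne']) ⟨hn, a, ?_, hacn a (ha ▸ Dvd.intro_left d rfl)⟩
    refine Finset.mem_coe.2 (Finset.mem_filter.2 ⟨Finset.mem_range.2 ?_, ha ▸ hc', ha1, hco, hcoP⟩)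
    have h1 : c ≤ T.sup id := Finset.le_sup (f := id) hc'
    have h2 : a ≤ c := Nat.le_of_dvd hc0 (ha ▸ Dvd.intro_left d rfl)
    omega
  · rw [Finset.sum_const, nsmul_eq_mul]
    refine le_of_eq ?_
    field_simp

/-- The main consequence of tautness: a finite pattern of `C`-free integers reappears, with
positive frequency, in each residue class `m0 + Pℤ` which looks like it, for `P` divisible
enough. -/
lemma many_free {C : Set ℕ} (hC : Taut C) (hC0 : 0 ∉ C) {ℓ : ℕ → ℕ}
    (hℓ : RealizesLowerDensity (MB C) ℓ) (I : Finset ℤ) (hI : ∀ n ∈ I, n ∉ MB C) :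
    ∃ Q : ℕ, 0 < Q ∧ ∀ P : ℕ, 0 < P → Q ∣ P → ∀ m0 : ℤ,
      (∀ n ∈ I, Int.gcd (n + m0) P = n.natAbs) → ∃ e > 0, ∀ᶠ i in atTop,
        e * ℓ i ≤ cnt {m | (P:ℤ) ∣ m - m0 ∧ ∀ n ∈ I, n + m ∉ MB C} (ℓ i) := by
  set ε : ℝ := 1 / (4 * (I.card + 1)) with hεdef
  have hε : 0 < ε := by positivity
  have hIε : I.card * ε ≤ 1 / 4 := by
    rw [hεdef, mul_one_div, div_le_iff₀ (by positivity)]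
    linarith
  have hex : ∀ n ∈ I, ∃ K0 : ℕ, ∀ P : ℕ, 0 < P → n.natAbs * K0.factorial ∣ P → ∀ n0 : ℤ,
      Int.gcd n0 P = n.natAbs → ∀ T : Finset ℕ, (T : Set ℕ) ⊆ C →
        UB ({m | (P:ℤ) ∣ m - n0} ∩ MB (T : Set ℕ)) (ε / P) := by
    intro n hn
    refine class_almost_free hC hC0 ?_ hε
    rintro ⟨c, hc, hcn⟩
    exact hI n hn ⟨c, hc, Int.dvd_natAbs.1 hcn⟩
  choose! K hK using hex
  by_cases h0 : (0:ℤ) ∈ I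
  · refine ⟨1, one_pos, fun P hP _ m0 hm => ?_⟩
    have := (Int.gcd_eq_zero_iff.1 (hm 0 h0)).2
    omega
  refine ⟨∏ n ∈ I, n.natAbs * (K n).factorial, Finset.prod_pos fun n hn => Nat.mul_pos
    (Int.natAbs_pos.2 fun h => h0 (h ▸ hn)) (Nat.factorial_pos _), fun P hP hQ m0 hm => ?_⟩
  have hP' : (0:ℝ) < P := by exact_mod_cast hP
  obtain ⟨T, hT, htail⟩ := tail_small hC0 hℓ (ε := ε / P) (by positivity)
  set G := {m : ℤ | (P:ℤ) ∣ m - m0 ∧ ∀ n ∈ I, n + m ∉ MB C} with hG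
  obtain ⟨K1, hK1⟩ := hasDens_class P hP m0
  have hU : UB (⋃ n ∈ I, {m | n + m ∈ {m | (P:ℤ) ∣ m - (n + m0)} ∩ MB (T : Set ℕ)})
      (∑ n ∈ I, ε / P) :=
    UB.biUnion _ fun n hn => (hK n hn P hP ((Finset.dvd_prod_of_mem _ hn).trans hQ) _ (hm n hn)
      T hT).shift n
  obtain ⟨K2, hK2⟩ := hU
  have hcov : {m : ℤ | (P:ℤ) ∣ m - m0} ⊆ G ∪
      ((⋃ n ∈ I, {m | n + m ∈ {m | (P:ℤ) ∣ m - (n + m0)} ∩ MB (T : Set ℕ)}) ∪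
       (⋃ n ∈ I, {m | n + m ∈ MB C \ MB (T : Set ℕ)})) := by
    intro m hmem
    by_cases hmG : m ∈ G
    · exact Or.inl hmG
    · have : ∃ n ∈ I, n + m ∈ MB C := by
        by_contra hcon
        push Not at hcon
        exact hmG ⟨hmem, hcon⟩
      obtain ⟨n, hn, hnm⟩ := this
      by_cases hmT : n + m ∈ MB (T : Set ℕ)
      · refine Or.inr (Or.inl (Set.mem_biUnion (x := n) hn ⟨?_, hmT⟩))
        have : n + m - (n + m0) = m - m0 := by ring
        rw [Set.mem_ofPred_eq, this]
        exact hmem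
      · exact Or.inr (Or.inr (Set.mem_biUnion (x := n) hn ⟨hnm, hmT⟩))
  have hc : Tendsto (fun i => (ℓ i : ℝ)) atTop atTop := tendsto_natCast_atTop_atTop.comp hℓ.1
  refine ⟨1 / (4 * P), by positivity, ?_⟩
  filter_upwards [htail, hc.eventually_ge_atTop ((K1 + K2 + ∑ n ∈ I, |(n:ℝ)|) * (4 * P))]
    with i h1 h2
  have h3 := (cnt_mono hcov (ℓ i)).trans ((cnt_union_le _ _ _).trans
    (add_le_add le_rfl (cnt_union_le _ _ _)))
  have h4 := hK2 (ℓ i)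
  have h5 : cnt (⋃ n ∈ I, {m | n + m ∈ MB C \ MB (T : Set ℕ)}) (ℓ i) ≤
      ∑ n ∈ I, (ε / P * ℓ i + |(n:ℝ)|) := by
    refine (cnt_biUnion_le I _ _).trans (Finset.sum_le_sum fun n _ => ?_)
    have := cnt_shift_le (MB C \ MB (T : Set ℕ)) n (ℓ i)
    push_cast at this
    linarith
  rw [Finset.sum_add_distrib, Finset.sum_const, nsmul_eq_mul] at h5
  rw [Finset.sum_const, nsmul_eq_mul] at h4
  have h6 := (abs_le.1 (hK1 (ℓ i))).1
  have h7 : I.card * (ε / P) ≤ 1 / 4 / P := by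
    rw [← mul_div_assoc]
    exact div_le_div_of_nonneg_right hIε hP'.le
  have h8 := mul_le_mul_of_nonneg_right h7 (Nat.cast_nonneg (α := ℝ) (ℓ i))
  have h9 : (K1 + K2 + ∑ n ∈ I, |(n:ℝ)|) ≤ 1 / (4 * P) * ℓ i := by
    rw [one_div_mul_eq_div, le_div_iff₀ (by positivity)]
    exact h2
  have e1 : (1 / 4 / P : ℝ) = 1 / (4 * P) := by field_simp
  have e2 : (1 / P : ℝ) = 4 * (1 / (4 * P)) := by field_simp
  rw [e1] at h8
  rw [e2] at h6
  rw [← mul_assoc] at h5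
  linarith

lemma le_of_eventually {ℓ : ℕ → ℕ} (hℓ : Tendsto ℓ atTop atTop) {G : Set ℤ} {e e' : ℝ}
    (h : ∀ᶠ i in atTop, e * ℓ i ≤ cnt G (ℓ i)) (h' : UB G e') : e ≤ e' := by
  by_contra hlt
  push Not at hlt
  obtain ⟨K, hK⟩ := h'
  have hc : Tendsto (fun i => (ℓ i : ℝ)) atTop atTop := tendsto_natCast_atTop_atTop.comp hℓ
  obtain ⟨i, h1, h2⟩ := (h.and (hc.eventually_gt_atTop (K / (e - e')))).exists
  rw [div_lt_iff₀ (by linarith)] at h2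
  have := hK (ℓ i)
  nlinarith

/-- Shift-by-`m` form of `many_free`: a pattern of `C`-free integers reappears at a place `m`
congruent to `m0` modulo `P`. -/
lemma exists_free {C : Set ℕ} (hC : Taut C) (hC0 : 0 ∉ C) (I : Finset ℤ)
    (hI : ∀ n ∈ I, n ∉ MB C) :
    ∃ Q : ℕ, 0 < Q ∧ ∀ P : ℕ, 0 < P → Q ∣ P → ∀ m0 : ℤ,
      (∀ n ∈ I, Int.gcd (n + m0) P = n.natAbs) →
        ∃ m : ℤ, (P:ℤ) ∣ m - m0 ∧ ∀ n ∈ I, n + m ∉ MB C := by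
  obtain ⟨ℓ, hℓ⟩ := exists_realizes (MB C)
  obtain ⟨Q, hQ, h⟩ := many_free hC hC0 hℓ I hI
  refine ⟨Q, hQ, fun P hP hQP m0 hm => ?_⟩
  obtain ⟨e, he, hev⟩ := h P hP hQP m0 hm
  by_contra hcon
  have hG : {m : ℤ | (P:ℤ) ∣ m - m0 ∧ ∀ n ∈ I, n + m ∉ MB C} = ∅ :=
    Set.eq_empty_iff_forall_notMem.2 fun m hm => hcon ⟨m, hm⟩
  rw [hG] at hev
  have : e ≤ 0 := le_of_eventually hℓ.1 hev ⟨0, fun L => by simp [cnt]⟩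
  linarith

/-! ### Divisors occurring with coprime cofactors -/

/-- The `d` having a multiple `d * a ∈ B` with `a` coprime to any prescribed number. When `0 ∉ B`
this is `B ∪ Dset B`. -/
def E (B : Set ℕ) : Set ℕ := {d | ∀ N : ℕ, 0 < N → ∃ a : ℕ, a.Coprime N ∧ d * a ∈ B}

lemma subset_E (B : Set ℕ) : B ⊆ E B := fun d hd _ _ => ⟨1, Nat.coprime_one_left _, by simpa⟩

lemma E_mono {B B' : Set ℕ} (h : B ⊆ B') : E B ⊆ E B' := fun _ hd N hN =>
  let ⟨a, ha, hda⟩ := hd N hN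
  ⟨a, ha, h hda⟩

lemma E_E (B : Set ℕ) : E (E B) ⊆ E B := fun d hd N hN => by
  obtain ⟨a, ha, hda⟩ := hd N hN
  obtain ⟨a', ha', hda'⟩ := hda N hN
  exact ⟨a * a', Nat.Coprime.mul_left ha ha', by rwa [← mul_assoc]⟩

lemma zero_notMem_E {B : Set ℕ} (hB : 0 ∉ B) : 0 ∉ E B := fun h => by
  obtain ⟨a, -, ha⟩ := h 1 one_pos
  rw [zero_mul] at ha
  exact hB ha

lemma Dset_subset_E (B : Set ℕ) : Dset B ⊆ E B := by
  rintro d ⟨A, hinf, hpos, hpw, hA⟩ N hN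
  by_contra hcon
  push Not at hcon
  -- otherwise each element of `A` shares a prime with `N`, and these primes are distinct
  have hne : ∀ a ∈ A, Nat.gcd a N ≠ 1 := fun a ha h => hcon a h (hA a ha)
  obtain ⟨x, hx, y, hy, hxy, hf⟩ := hinf.exists_ne_map_eq_of_mapsTo
    (f := fun a => (Nat.gcd a N).minFac) (t := (N.primeFactors : Set ℕ)) (fun a ha => by
      refine Finset.mem_coe.2 (Nat.mem_primeFactors.2 ⟨Nat.minFac_prime (hne a ha), ?_, hN.ne'⟩)
      exact (Nat.minFac_dvd _).trans (Nat.gcd_dvd_right _ _)) (Finset.finite_toSet _)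
  have hp := Nat.minFac_prime (hne x hx)
  have h1 : (Nat.gcd x N).minFac ∣ x := (Nat.minFac_dvd _).trans (Nat.gcd_dvd_left _ _)
  have h2 : (Nat.gcd x N).minFac ∣ y := by
    rw [hf]
    exact (Nat.minFac_dvd _).trans (Nat.gcd_dvd_left _ _)
  have := Nat.dvd_gcd h1 h2
  rw [hpw hx hy hxy] at this
  exact hp.one_lt.ne' (Nat.dvd_one.1 this)

lemma E_subset {B : Set ℕ} (hB : 0 ∉ B) : E B ⊆ B ∪ Dset B := by
  intro d hd
  by_cases hdB : d ∈ B
  · exact Or.inl hdB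
  refine Or.inr ?_
  choose! f hf hfB using hd
  -- greedily choose cofactors, each coprime to all the previous ones
  let q : ℕ → ℕ := fun n => Nat.rec 1 (fun _ x => x * f x) n
  have hqs : ∀ n, q (n + 1) = q n * f (q n) := fun n => rfl
  have hf1 : ∀ N, 0 < N → 1 < f N := by
    intro N hN
    have h := hfB N hN
    rcases Nat.lt_or_ge 1 (f N) with h1 | h1
    · exact h1
    · interval_cases hfN : f N
      · exact absurd (by simpa using h) hB
      · exact absurd (by simpa using h) hdB
  have hq : ∀ n, 0 < q n := by
    intro n
    induction n with
    | zero => exact one_pos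
    | succ n ih =>
      rw [hqs]
      exact Nat.mul_pos ih (by have := hf1 _ ih; omega)
  have hqd : ∀ m n, m ≤ n → q m ∣ q n := fun m n h => by
    induction n, h using Nat.le_induction with
    | base => exact dvd_rfl
    | succ n _ ih => exact ih.trans (by rw [hqs]; exact dvd_mul_right _ _)
  have hlt : ∀ m n, m < n → Nat.Coprime (f (q m)) (f (q n)) := fun m n h =>
    Nat.Coprime.coprime_dvd_left (((by rw [hqs]; exact dvd_mul_left _ _ : f (q m) ∣ q (m + 1))).trans
      (hqd _ _ h)) (hf _ (hq n)).symm
  have hco : ∀ m n, m ≠ n → Nat.Coprime (f (q m)) (f (q n)) := fun m n h => by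
    rcases lt_or_gt_of_ne h with h | h
    · exact hlt m n h
    · exact (hlt n m h).symm
  have hinj : Function.Injective fun n => f (q n) := by
    intro m n hmn
    by_contra hne
    have h := hco m n hne
    simp only at hmn
    rw [hmn, Nat.coprime_self] at h
    have := hf1 _ (hq n)
    omega
  refine ⟨Set.range fun n => f (q n), Set.infinite_range_of_injective hinj, ?_, ?_, ?_⟩
  · rintro _ ⟨n, rfl⟩
    have := hf1 _ (hq n)
    simp only
    omega
  · rintro _ ⟨m, rfl⟩ _ ⟨n, rfl⟩ hne
    exact hco m n fun h => hne (by rw [h])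
  · rintro _ ⟨n, rfl⟩
    exact hfB _ (hq n)

lemma exists_primPart {S : Set ℕ} (hS : 0 ∉ S) : ∀ x ∈ S, ∃ b ∈ primPart S, b ∣ x := by
  intro x
  induction x using Nat.strong_induction_on with
  | _ x ih =>
    intro hx
    by_cases h : ∀ b' ∈ S, b' ∣ x → b' = x
    · exact ⟨x, ⟨hx, h⟩, dvd_rfl⟩
    · push Not at h
      obtain ⟨b', hb', hdvd, hne⟩ := h
      have hx0 : 0 < x := Nat.pos_of_ne_zero fun h0 => hS (h0 ▸ hx)
      obtain ⟨b, hb, hbb⟩ := ih b' (lt_of_le_of_ne (Nat.le_of_dvd hx0 hdvd) hne) hb'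
      exact ⟨b, hb, hbb.trans hdvd⟩

lemma Bstar_iff {B : Set ℕ} (hB : 0 ∉ B) (c : ℕ) :
    (∃ b ∈ Bstar B, b ∣ c) ↔ ∃ d ∈ E B, d ∣ c := by
  have h0 : B ∪ Dset B ⊆ E B := Set.union_subset (subset_E B) (Dset_subset_E B)
  constructor
  · rintro ⟨b, hb, hbc⟩
    exact ⟨b, h0 hb.1, hbc⟩
  · rintro ⟨d, hd, hdc⟩
    obtain ⟨b, hb, hbd⟩ := exists_primPart (fun h => zero_notMem_E hB (h0 h)) d (E_subset hB hd)
    exact ⟨b, hb, hbd.trans hdc⟩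

/-- From a family of factorizations `d' * a ∈ B` with `d' ∣ d` and `a` coprime to arbitrary
numbers, one finds a fixed `d'` which works (pigeonhole over the divisors of `d`). -/
lemma exists_mem_E {B : Set ℕ} {d : ℕ} (hd : 0 < d)
    (h : ∀ N : ℕ, 0 < N → ∃ d' a : ℕ, d' ∣ d ∧ a.Coprime N ∧ d' * a ∈ B) :
    ∃ d' ∈ E B, d' ∣ d := by
  by_contra hcon
  have h1 : ∀ d' ∈ d.divisors, ∃ N : ℕ, 0 < N ∧ ∀ a : ℕ, a.Coprime N → d' * a ∉ B := by
    intro d' hd'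
    by_contra hno
    push Not at hno
    exact hcon ⟨d', hno, Nat.dvd_of_mem_divisors hd'⟩
  choose! N hN hNa using h1
  obtain ⟨d', a, hd', ha, hmem⟩ := h (∏ x ∈ d.divisors, N x) (Finset.prod_pos hN)
  have hm : d' ∈ d.divisors := Nat.mem_divisors.2 ⟨hd', hd.ne'⟩
  exact hNa d' hm a (ha.coprime_dvd_right (Finset.dvd_prod_of_mem N hm)) hmem

/-- A divisor of `d * a` splits as `g * a'` with `g ∣ d` and `a' ∣ a`. -/
lemma split_dvd {b d a : ℕ} (h : b ∣ d * a) : ∃ g a', g ∣ d ∧ a' ∣ a ∧ b = g * a' :=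
  exists_dvd_and_dvd_of_dvd_mul h

lemma E_div {B B1 : Set ℕ} (hB : 0 ∉ B) (h : ∀ b ∈ B, ∃ b1 ∈ B1, b1 ∣ b) {d : ℕ} (hd : d ∈ E B) :
    ∃ d1 ∈ E B1, d1 ∣ d := by
  refine exists_mem_E (Nat.pos_of_ne_zero fun h0 => zero_notMem_E hB (h0 ▸ hd)) fun N hN => ?_
  obtain ⟨a, ha, hda⟩ := hd N hN
  obtain ⟨b1, hb1, hdvd⟩ := h _ hda
  obtain ⟨g, a', hg, ha', rfl⟩ := split_dvd hdvd
  exact ⟨g, a', hg, ha.coprime_dvd_left ha', hb1⟩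

lemma behrend_zero {A : Set ℕ} (h : Behrend A) : 0 ∉ A := fun h0 => lt_irrefl 0 (h.1 0 h0)

lemma Cset_subset_E (B : Set ℕ) : Cset B ⊆ E B := by
  rintro c ⟨A, hA, hAB⟩ N hN
  obtain ⟨a, ha, hco⟩ := exists_coprime_of_dlt (behrend_zero hA) (dlt_of_behrend hA) hN
  exact ⟨a, hco, hAB a ha⟩

lemma Bprime_subset_E (B : Set ℕ) : Bprime B ⊆ E B := fun _ hb =>
  hb.1.elim (fun h => subset_E B h) fun h => Cset_subset_E B h

lemma zero_notMem_Bprime {B : Set ℕ} (hB : 0 ∉ B) : 0 ∉ Bprime B := fun h =>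
  zero_notMem_E hB (Bprime_subset_E B h)

lemma exists_Bprime {B : Set ℕ} (hB : 0 ∉ B) : ∀ b ∈ B, ∃ b' ∈ Bprime B, b' ∣ b := fun b hb =>
  exists_primPart (fun h => zero_notMem_E hB (h.elim (fun h => subset_E B h)
    fun h => Cset_subset_E B h)) b (Or.inl hb)

lemma E_Bprime_iff {B : Set ℕ} (hB : 0 ∉ B) (c : ℕ) :
    (∃ d ∈ E (Bprime B), d ∣ c) ↔ ∃ d ∈ E B, d ∣ c := by
  constructor
  · rintro ⟨d, hd, hdc⟩
    exact ⟨d, E_E B (E_mono (Bprime_subset_E B) hd), hdc⟩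
  · rintro ⟨d, hd, hdc⟩
    obtain ⟨d1, h1, h2⟩ := E_div hB (exists_Bprime hB) hd
    exact ⟨d1, h1, h2.trans hdc⟩

/-- If `c * A ⊆ B` with `A` Behrend and all elements of `B` have divisors in the taut set `C`, then
`c` has a divisor in `C`: otherwise positively many multiples of `c` would be `C`-free, hence
`c * A`-free. -/
lemma Cset_div {B C : Set ℕ} (hC : Taut C) (hC0 : 0 ∉ C) (h : ∀ b ∈ B, ∃ c ∈ C, c ∣ b)
    (hB : 0 ∉ B) {c : ℕ} (hc : c ∈ Cset B) : ∃ c' ∈ C, c' ∣ c := by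
  by_contra hcon
  have hcC : (c:ℤ) ∉ MB C := by
    rintro ⟨c', h1, h2⟩
    exact hcon ⟨c', h1, by exact_mod_cast h2⟩
  have hc0 : 0 < c := Nat.pos_of_ne_zero fun h0 => zero_notMem_E hB (h0 ▸ Cset_subset_E B hc)
  obtain ⟨A, hA, hAB⟩ := hc
  obtain ⟨ℓ, hℓ⟩ := exists_realizes (MB C)
  obtain ⟨Q, hQ, hev⟩ := many_free hC hC0 hℓ {(c:ℤ)} (by simpa using hcC)
  obtain ⟨e, he, hev⟩ := hev (c * Q) (Nat.mul_pos hc0 hQ) (dvd_mul_left _ _) 0 (by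
    intro n hn
    rw [Finset.mem_singleton.1 hn, add_zero, Int.gcd_natCast_natCast, Int.natAbs_natCast]
    simp)
  have hub := ((ub_free (behrend_zero hA) (dlt_of_behrend hA) (ε := e / 2)
    (by linarith)).dilate c hc0).shift c
  have := le_of_eventually hℓ.1 hev (hub.mono ?_ le_rfl)
  · linarith
  · rintro m ⟨hm, hfree⟩
    have hfree := hfree c (by simp)
    have hcm : (c:ℤ) ∣ m := by
      rw [sub_zero] at hm
      exact (dvd_trans (by push_cast; exact dvd_mul_right _ _) hm)
    obtain ⟨j, rfl⟩ := hcm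
    refine ⟨1 + j, ?_, by ring⟩
    rintro ⟨a, ha, haj⟩
    obtain ⟨c', hc', hdvd⟩ := h _ (hAB a ha)
    refine hfree ⟨c', hc', (Int.natCast_dvd_natCast.2 hdvd).trans ?_⟩
    push_cast
    rw [show (c:ℤ) + c * j = c * (1 + j) by ring]
    exact mul_dvd_mul_left _ haj

/-! ### Orbit closures and quasi-generic measures -/

lemma mem_orbitClosure_iff (x y : ℤ → Bool) :
    y ∈ orbitClosure x ↔ ∀ W : Finset ℤ, ∃ m : ℤ, ∀ n ∈ W, y n = x (n + m) := by
  unfold orbitClosure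
  rw [mem_closure_iff]
  constructor
  · intro h W
    have hopen : IsOpen (⋂ n ∈ W, {z : ℤ → Bool | z n = y n}) :=
      isOpen_biInter_finset fun n _ =>
        isOpen_discrete ({y n} : Set Bool) |>.preimage
          (show Continuous fun z : ℤ → Bool => z n from continuous_apply n)
    obtain ⟨z, hz, m, rfl⟩ := h _ hopen (by simp)
    refine ⟨m, fun n hn => ?_⟩
    exact (Set.mem_iInter₂.1 hz n hn).symm
  · intro h o ho hy
    obtain ⟨W, u, hu, hsub⟩ := isOpen_pi_iff.1 ho y hy
    obtain ⟨m, hm⟩ := h W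
    refine ⟨_, hsub fun n hn => ?_, m, rfl⟩
    simp only
    rw [← hm n hn]
    exact (hu n hn).2

lemma self_mem_orbitClosure (x : ℤ → Bool) : x ∈ orbitClosure x :=
  (mem_orbitClosure_iff x x).2 fun _ => ⟨0, fun n _ => by rw [add_zero]⟩

lemma orbitClosure_subset {x y : ℤ → Bool} (h : y ∈ orbitClosure x) :
    orbitClosure y ⊆ orbitClosure x := by
  intro z hz
  rw [mem_orbitClosure_iff] at h hz ⊢
  intro W
  obtain ⟨m, hm⟩ := hz W
  obtain ⟨m', hm'⟩ := h (W.image (· + m))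
  refine ⟨m + m', fun n hn => ?_⟩
  rw [hm n hn, hm' _ (Finset.mem_image_of_mem _ hn), add_assoc]

lemma cnt_eq_nat (A : Set ℤ) (L : ℕ) :
    cnt A L = ∑ n ∈ Finset.Icc 1 L, if (n:ℤ) ∈ A then (1:ℝ) else 0 := by
  induction L with
  | zero => simp [cnt]
  | succ L ih => rw [cnt_succ, ih, Finset.sum_Icc_succ_top (by omega)]; push_cast; rfl

/-- Sets defined by finitely many coordinates are clopen. -/
lemma isClopen_window (W : Finset ℤ) (S : Set (W → Bool)) :
    IsClopen {z : ℤ → Bool | (fun n : W => z n) ∈ S} :=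
  (isClopen_discrete S).preimage (continuous_pi fun _ => continuous_apply _)

lemma tendsto_freq {ℓ : ℕ → ℕ} {x : ℤ → Bool} {ν : Measure (ℤ → Bool)} (h : QuasiGeneric ℓ x ν)
    {U : Set (ℤ → Bool)} (hU : IsClopen U) :
    Tendsto (fun i => cnt {m | (fun n => x (n + m)) ∈ U} (ℓ i) / ℓ i) atTop (𝓝 (ν.real U)) := by
  have := h ⟨U.indicator 1, hU.continuous_indicator continuous_const⟩
  simp only [ContinuousMap.coe_mk] at this
  rw [integral_indicator_one hU.isOpen.measurableSet] at this
  refine this.congr fun i => ?_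
  rw [cnt_eq_nat]
  congr 1

lemma measurable_shift : Measurable shift :=
  measurable_pi_lambda _ fun _ => measurable_pi_apply _

lemma continuous_shift : Continuous shift :=
  continuous_pi fun _ => continuous_apply _

/-- Limits of orbital averages are shift-invariant, since the sums for `f ∘ shift` and `f` differ
only by boundary terms. -/
lemma map_shift_eq {ℓ : ℕ → ℕ} (hℓ : Tendsto ℓ atTop atTop) {x : ℤ → Bool}
    {ν : Measure (ℤ → Bool)} [IsProbabilityMeasure ν] (h : QuasiGeneric ℓ x ν) :
    ν.map shift = ν := by
  have : IsProbabilityMeasure (ν.map shift) :=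
    Measure.isProbabilityMeasure_map measurable_shift.aemeasurable
  refine ext_of_forall_integral_eq_of_IsFiniteMeasure fun f => ?_
  rw [integral_map measurable_shift.aemeasurable f.continuous.aestronglyMeasurable]
  have h1 := h f.toContinuousMap
  have h2 := h ⟨fun z => f (shift z), f.continuous.comp continuous_shift⟩
  simp only [ContinuousMap.coe_mk] at h2
  have htel : ∀ L : ℕ, ∑ n ∈ Finset.Icc 1 L, f (shift (shiftn n x)) -
      ∑ n ∈ Finset.Icc 1 L, f (shiftn n x) = f (shiftn (L + 1) x) - f (shiftn 1 x) := by
    intro L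
    have hs : ∀ n, shift (shiftn n x) = shiftn (n + 1) x := fun n => by
      funext k
      simp only [shift, shiftn]
      congr 1
      push_cast
      ring
    induction L with
    | zero => simp
    | succ L ih =>
      rw [Finset.sum_Icc_succ_top (by omega), Finset.sum_Icc_succ_top (by omega), hs]
      linarith
  have hc : Tendsto (fun i => (ℓ i : ℝ)) atTop atTop := tendsto_natCast_atTop_atTop.comp hℓ
  have h3 : Tendsto (fun i => (∑ n ∈ Finset.Icc 1 (ℓ i), f (shift (shiftn n x))) / (ℓ i : ℝ) -
      (∑ n ∈ Finset.Icc 1 (ℓ i), f (shiftn n x)) / (ℓ i : ℝ)) atTop (𝓝 0) := by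
    refine squeeze_zero_norm (a := fun i => (2 * ‖f‖) / (ℓ i : ℝ)) (fun i => ?_)
      (hc.const_div_atTop _)
    rw [← sub_div, htel, norm_div, Real.norm_natCast]
    refine div_le_div_of_nonneg_right ?_ (Nat.cast_nonneg _)
    refine (norm_sub_le _ _).trans ?_
    have := f.norm_coe_le_norm (shiftn (ℓ i + 1) x)
    have := f.norm_coe_le_norm (shiftn 1 x)
    linarith
  have h4 := tendsto_nhds_unique h3 (h2.sub h1)
  have h5 : ∫ y, f (shift y) ∂ν - ∫ y, f y ∂ν = 0 := h4.symm
  linarith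

/-- A quasi-generic measure is carried by the orbit closure, which is a countable intersection of
clopen sets containing the whole orbit. -/
lemma measure_orbitClosure {ℓ : ℕ → ℕ} (hℓ : Tendsto ℓ atTop atTop) {x : ℤ → Bool}
    {ν : Measure (ℤ → Bool)} [IsProbabilityMeasure ν] (h : QuasiGeneric ℓ x ν) :
    ν (orbitClosure x) = 1 := by
  let XL : Finset ℤ → Set (ℤ → Bool) := fun W =>
    {z | (fun n : W => z n) ∈ {w : W → Bool | ∃ m : ℤ, ∀ n : W, w n = x (n + m)}}
  have hX : orbitClosure x = ⋂ W, XL W := by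
    ext y
    rw [mem_orbitClosure_iff, Set.mem_iInter]
    refine forall_congr' fun W => exists_congr fun m => ?_
    simp
  have hc : Tendsto (fun i => (ℓ i : ℝ)) atTop atTop := tendsto_natCast_atTop_atTop.comp hℓ
  have h1 : ∀ W, ν (XL W) = 1 := by
    intro W
    have h2 := tendsto_freq h (isClopen_window W {w | ∃ m : ℤ, ∀ n : W, w n = x (n + m)})
    have h3 : {m : ℤ | (fun n => x (n + m)) ∈ XL W} = Set.univ :=
      Set.eq_univ_of_forall fun m => ⟨m, fun n => rfl⟩
    have h4 : Tendsto (fun i => cnt {m : ℤ | (fun n => x (n + m)) ∈ XL W} (ℓ i) / ℓ i) atTop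
        (𝓝 1) := by
      rw [h3]
      refine tendsto_const_nhds.congr' ?_
      filter_upwards [hc.eventually_gt_atTop 0] with i hi
      rw [cnt_univ, div_self hi.ne']
    have h5 : ν.real (XL W) = 1 := tendsto_nhds_unique h2 h4
    rw [measureReal_def] at h5
    exact (ENNReal.toReal_eq_one_iff _).1 h5
  rw [hX, ← prob_compl_eq_zero_iff, Set.compl_iInter, measure_iUnion_null_iff]
  · intro W
    rw [prob_compl_eq_zero_iff (isClopen_window W _).isOpen.measurableSet]
    exact h1 W
  · exact MeasurableSet.iInter fun W => (isClopen_window W _).isOpen.measurableSet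

lemma mirsky_mem {C : Set ℕ} {ν : Measure (ℤ → Bool)} (hν : IsMirsky C ν) : ν ∈ InvM (Xeta C) := by
  obtain ⟨ℓ, hℓ⟩ := exists_realizes (MB C)
  have := hν.1
  exact ⟨hν.1, map_shift_eq hℓ.1 (hν.2 ℓ hℓ), measure_orbitClosure hℓ.1 (hν.2 ℓ hℓ)⟩

lemma InvM_mono {X Y : Set (ℤ → Bool)} (h : X ⊆ Y) : InvM X ⊆ InvM Y := by
  rintro μ ⟨h1, h2, h3⟩
  exact ⟨h1, h2, le_antisymm prob_le_one (h3 ▸ measure_mono h)⟩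

lemma eta_eq_true {B : Set ℕ} {n : ℤ} : eta B n = true ↔ n ∉ MB B := by
  by_cases h : n ∈ MB B <;> simp [eta, FB, h]

lemma eta_eq_false {B : Set ℕ} {n : ℤ} : eta B n = false ↔ n ∈ MB B := by
  by_cases h : n ∈ MB B <;> simp [eta, FB, h]

lemma eta_eq_iff {B C : Set ℕ} {n m : ℤ} : eta C n = eta B m ↔ (n ∈ MB C ↔ m ∈ MB B) := by
  rw [← eta_eq_false, ← eta_eq_false]
  cases eta C n <;> cases eta B m <;> simp

lemma MB_subset {B C : Set ℕ} (h : ∀ b ∈ B, ∃ c ∈ C, c ∣ b) : MB B ⊆ MB C := by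
  rintro n ⟨b, hb, hbn⟩
  obtain ⟨c, hc, hcb⟩ := h b hb
  exact ⟨c, hc, (Int.natCast_dvd_natCast.2 hcb).trans hbn⟩

lemma eta_le_iff (B C : Set ℕ) : (∀ n, eta C n ≤ eta B n) ↔ ∀ b ∈ B, ∃ c ∈ C, c ∣ b := by
  constructor
  · intro h b hb
    have h1 : eta B (b:ℤ) = false := eta_eq_false.2 ⟨b, hb, dvd_rfl⟩
    have h2 : eta C (b:ℤ) = false := by
      have := h b
      rw [h1] at this
      exact Bool.eq_false_of_le_false this
    obtain ⟨c, hc, hcb⟩ := eta_eq_false.1 h2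
    exact ⟨c, hc, by exact_mod_cast hcb⟩
  · intro h n
    rw [Bool.le_iff_imp]
    intro hn
    rw [eta_eq_true] at hn ⊢
    exact fun h' => hn (MB_subset h h')

/-! ### Recovering the arithmetic from the dynamics -/

/-- Along a sequence realizing the lower density, every pattern of `eta C` recurs with positive
frequency. -/
lemma recurrence {C : Set ℕ} (hC : Taut C) (hC0 : 0 ∉ C) {ℓ : ℕ → ℕ}
    (hℓ : RealizesLowerDensity (MB C) ℓ) (W : Finset ℤ) :
    ∃ e > 0, ∀ᶠ i in atTop, e * ℓ i ≤ cnt {m | ∀ n ∈ W, eta C n = eta C (n + m)} (ℓ i) := by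
  rcases C.eq_empty_or_nonempty with rfl | ⟨c0, hc0⟩
  · refine ⟨1, one_pos, Eventually.of_forall fun i => ?_⟩
    have : {m : ℤ | ∀ n ∈ W, eta ∅ n = eta ∅ (n + m)} = Set.univ :=
      Set.eq_univ_of_forall fun m n _ => by simp [eta_eq_iff, MB]
    rw [this, cnt_univ, one_mul]
  set I := W.filter (· ∉ MB C) with hIdef
  set J := W.filter (· ∈ MB C) with hJdef
  have hI : ∀ n ∈ I, n ∉ MB C := fun n hn => (Finset.mem_filter.1 hn).2
  have hJ : ∀ n ∈ J, ∃ c ∈ C, (c:ℤ) ∣ n := fun n hn => (Finset.mem_filter.1 hn).2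
  choose! c hcC hcn using hJ
  have hI0 : ∀ n ∈ I, n ≠ 0 := fun n hn h => hI n hn ⟨c0, hc0, h ▸ dvd_zero _⟩
  obtain ⟨Q, hQ, h⟩ := many_free hC hC0 hℓ I hI
  have hPpos : 0 < Q * ((∏ n ∈ J, c n) * ∏ n ∈ I, n.natAbs) :=
    Nat.mul_pos hQ (Nat.mul_pos
      (Finset.prod_pos fun n hn => Nat.pos_of_ne_zero fun h => hC0 (h ▸ hcC n hn))
      (Finset.prod_pos fun n hn => Int.natAbs_pos.2 (hI0 n hn)))
  obtain ⟨e, he, hev⟩ := h _ hPpos (dvd_mul_right _ _) 0 (by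
    intro n hn
    rw [add_zero, Int.gcd_eq_natAbs, Int.natAbs_natCast]
    exact Nat.gcd_eq_left (((Finset.dvd_prod_of_mem _ hn).mul_left _).mul_left _))
  refine ⟨e, he, hev.mono fun i hi => hi.trans (cnt_mono ?_ _)⟩
  rintro m ⟨hm, hfree⟩ n hn
  rw [sub_zero] at hm
  rw [eta_eq_iff]
  by_cases hnC : n ∈ MB C
  · have hnJ : n ∈ J := Finset.mem_filter.2 ⟨hn, hnC⟩
    refine iff_of_true hnC ⟨c n, hcC n hnJ, dvd_add (hcn n hnJ) (dvd_trans ?_ hm)⟩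
    exact Int.natCast_dvd_natCast.2 (((Finset.dvd_prod_of_mem _ hnJ).mul_right _).mul_left _)
  · exact iff_of_false hnC (hfree n (Finset.mem_filter.2 ⟨hn, hnC⟩))

/-- By `recurrence` each cylinder around `eta C` has positive Mirsky measure, so it meets an orbit
closure of full measure. -/
lemma mem_of_mirsky {C : Set ℕ} (hC : Taut C) (hC0 : 0 ∉ C) {ν : Measure (ℤ → Bool)}
    (hν : IsMirsky C ν) {x : ℤ → Bool} (h : ν ∈ InvM (orbitClosure x)) :
    eta C ∈ orbitClosure x := by
  obtain ⟨ℓ, hℓ⟩ := exists_realizes (MB C)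
  have hp := hν.1
  rw [mem_orbitClosure_iff]
  intro W
  obtain ⟨e, he, hev⟩ := recurrence hC hC0 hℓ W
  set U : Set (ℤ → Bool) := {z | (fun n : W => z n) ∈ {w : W → Bool | ∀ n : W, eta C n = w n}}
    with hU
  have hUc : IsClopen U := isClopen_window W _
  have hfreq := tendsto_freq (hν.2 ℓ hℓ) hUc
  have hset : {m : ℤ | (fun n => eta C (n + m)) ∈ U} =
      {m | ∀ n ∈ W, eta C n = eta C (n + m)} := by
    ext m
    simp [hU]
  rw [hset] at hfreq
  have hc : Tendsto (fun i => (ℓ i : ℝ)) atTop atTop := tendsto_natCast_atTop_atTop.comp hℓ.1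
  have hpos : e ≤ ν.real U := by
    refine ge_of_tendsto hfreq ?_
    filter_upwards [hev, hc.eventually_gt_atTop 0] with i h1 h2
    rwa [le_div_iff₀ h2]
  have hne : (U ∩ orbitClosure x).Nonempty := by
    by_contra hcon
    have hdisj : Disjoint U (orbitClosure x) :=
      Set.disjoint_iff_inter_eq_empty.2 (Set.not_nonempty_iff_eq_empty.1 hcon)
    have h1 := measure_union hdisj (μ := ν) (isClosed_closure.measurableSet)
    rw [h.2.2] at h1
    have h2 : ν (U ∪ orbitClosure x) ≤ 1 := prob_le_one
    have h3 : ν U = 0 := by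
      rw [h1] at h2
      by_contra h0
      have : (1:ENNReal) < ν U + 1 := by
        rw [add_comm]
        exact ENNReal.lt_add_right (by simp) h0
      exact absurd h2 (not_le.2 this)
    rw [measureReal_def, h3] at hpos
    simp at hpos
    linarith
  obtain ⟨y, hyU, hy⟩ := hne
  obtain ⟨m, hm⟩ := (mem_orbitClosure_iff x y).1 hy W
  exact ⟨m, fun n hn => (hyU ⟨n, hn⟩).trans (hm n hn)⟩

lemma exists_coprime_add (r : ℤ) (b : ℕ) (h : Int.gcd r b = 1) {N : ℕ} (hN : 0 < N) :
    ∃ k : ℕ, k ≤ N ∧ Int.gcd (r + b * k) N = 1 := by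
  -- take for `k` the product of the primes dividing `N` but not `r`
  refine ⟨∏ p ∈ N.primeFactors.filter (fun p : ℕ => ¬ (p:ℤ) ∣ r), p, ?_, ?_⟩
  · refine Nat.le_of_dvd hN (dvd_trans ?_ (Nat.prod_primeFactors_dvd N))
    exact Finset.prod_dvd_prod_of_subset _ _ _ (Finset.filter_subset _ _)
  · set k := ∏ p ∈ N.primeFactors.filter (fun p : ℕ => ¬ (p:ℤ) ∣ r), p with hk
    by_contra hne
    obtain ⟨p, hp, hpd⟩ := Nat.exists_prime_and_dvd hne
    have h1 : (p:ℤ) ∣ r + b * k := (Int.natCast_dvd_natCast.2 hpd).trans (Int.gcd_dvd_left _ _)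
    have h2 : p ∣ N := Int.natCast_dvd_natCast.1
      ((Int.natCast_dvd_natCast.2 hpd).trans (Int.gcd_dvd_right _ _))
    have hpN : p ∈ N.primeFactors := Nat.mem_primeFactors.2 ⟨hp, h2, hN.ne'⟩
    by_cases hpr : (p:ℤ) ∣ r
    · have h3 : (p:ℤ) ∣ b * k := (dvd_add_right hpr).1 h1
      rw [← Nat.cast_mul, Int.natCast_dvd_natCast, hp.dvd_mul] at h3
      rcases h3 with h3 | h3
      · have : p ∣ Int.gcd r b := Int.natCast_dvd_natCast.1
          (Int.dvd_coe_gcd hpr (Int.natCast_dvd_natCast.2 h3))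
        rw [h] at this
        exact hp.one_lt.ne' (Nat.dvd_one.1 this)
      · rw [hk, hp.prime.dvd_finsetProd_iff] at h3
        obtain ⟨q, hq, hpq⟩ := h3
        rw [Finset.mem_filter] at hq
        rw [(Nat.prime_dvd_prime_iff_eq hp (Nat.prime_of_mem_primeFactors hq.1)).1 hpq] at hpr
        exact hq.2 hpr
    · have h3 : p ∣ k := Finset.dvd_prod_of_mem (fun p => p) (Finset.mem_filter.2 ⟨hpN, hpr⟩)
      exact hpr ((dvd_add_left ((Int.natCast_dvd_natCast.2 h3).mul_left _)).1 h1)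

/-- A taut set whose multiples contain a progression `r + bℤ` contains a divisor of `b`. -/
lemma div_of_progression {C : Set ℕ} (hC : Taut C) (hC0 : 0 ∉ C) {b : ℕ} (hb : 0 < b) {r : ℤ}
    (h : ∀ n : ℤ, (b:ℤ) ∣ n - r → n ∈ MB C) : ∃ c ∈ C, c ∣ b := by
  set g := Int.gcd r b with hg
  have hgb : g ∣ b := Int.natCast_dvd_natCast.1 (Int.gcd_dvd_right _ _)
  have hg0 : 0 < g := Nat.pos_of_dvd_of_pos hgb hb
  by_cases hgC : (g:ℤ) ∈ MB C
  · obtain ⟨c, hc, hcg⟩ := hgC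
    exact ⟨c, hc, (Int.natCast_dvd_natCast.1 hcg).trans hgb⟩
  exfalso
  obtain ⟨Q, hQ, hfree⟩ := exists_free hC hC0 {(g:ℤ)} (by simpa using hgC)
  obtain ⟨b', hb'⟩ := hgb
  obtain ⟨r', hr'⟩ : (g:ℤ) ∣ r := Int.gcd_dvd_left _ _
  have hb'0 : 0 < b' := Nat.pos_of_ne_zero fun h0 => by rw [h0] at hb'; omega
  have hco : Int.gcd r' b' = 1 := by
    have h1 : Int.gcd (g * r') (g * b') = g * Int.gcd r' b' := by
      rw [Int.gcd_mul_left, Int.natAbs_natCast]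
    rw [← hr', show (g:ℤ) * b' = (b:ℤ) by exact_mod_cast hb'.symm, ← hg] at h1
    exact Nat.eq_of_mul_eq_mul_left hg0 (by omega)
  obtain ⟨k, -, hk⟩ := exists_coprime_add r' b' hco (Nat.mul_pos hQ hb'0)
  obtain ⟨m, hm, hmfree⟩ := hfree (Q * b) (Nat.mul_pos hQ hb) (dvd_mul_right _ _)
    (g * (r' + b' * k) - g) (by
      intro n hn
      rw [Finset.mem_singleton.1 hn, add_sub_cancel, Int.natAbs_natCast,
        show ((Q * b : ℕ) : ℤ) = g * ((Q * b' : ℕ) : ℤ) by rw [hb']; push_cast; ring,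
        Int.gcd_mul_left, hk, Int.natAbs_natCast, mul_one])
  refine hmfree g (by simp) (h _ ?_)
  have h1 : (b:ℤ) ∣ m - (g * (r' + b' * k) - g) :=
    (Int.natCast_dvd_natCast.2 (dvd_mul_left b Q)).trans hm
  have h2 : (g:ℤ) + m - r = (m - (g * (r' + b' * k) - g)) + b * k := by
    rw [hb', hr']
    push_cast
    ring
  rw [h2]
  exact dvd_add h1 (dvd_mul_right _ _)

/-- A window of `eta C` with a free position in each class modulo `b ∈ B` cannot occur in `eta B`. So
some class modulo `b` consists of multiples of `C`. -/
lemma left_of_mem {B C : Set ℕ} (hB : 0 ∉ B) (hC : Taut C) (hC0 : 0 ∉ C)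
    (h : eta C ∈ Xeta B) : ∀ b ∈ B, ∃ c ∈ C, c ∣ b := by
  intro b hb
  have hb0 : 0 < b := Nat.pos_of_ne_zero fun h0 => hB (h0 ▸ hb)
  rw [Xeta, mem_orbitClosure_iff] at h
  suffices ∃ r ∈ Finset.range b, ∀ n : ℤ, (b:ℤ) ∣ n - (r:ℤ) → n ∈ MB C by
    obtain ⟨r, -, hr⟩ := this
    exact div_of_progression hC hC0 hb0 hr
  by_contra hcon
  push Not at hcon
  choose! n hn hnC using hcon
  obtain ⟨m, hm⟩ := h ((Finset.range b).image n)
  have hb0' : (b:ℤ) ≠ 0 := by omega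
  have hr0 := Int.emod_nonneg (-m) hb0'
  have hrb := Int.emod_lt_of_pos (-m) (show (0:ℤ) < b by omega)
  have hr : ((-m) % b).toNat ∈ Finset.range b := by
    rw [Finset.mem_range]
    omega
  refine hnC _ hr ?_
  rw [← eta_eq_false, hm _ (Finset.mem_image_of_mem n hr), eta_eq_false]
  refine ⟨b, hb, ?_⟩
  have h1 := hn _ hr
  rw [Int.toNat_of_nonneg hr0] at h1
  have h2 : (b:ℤ) ∣ -m - (-m) % b := Int.dvd_self_sub_emod
  have h3 := dvd_sub h1 h2
  have h4 : ∀ x : ℤ, x - (-m) % b - (-m - (-m) % b) = x + m := fun x => by ring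
  rwa [h4] at h3

/-- If `c * k`, for `k ≤ N`, is translated by `m` into the multiples of `B`, choose `k` with
`(c * k + m) / gcd (m, c)` coprime to `N`: this gives an element `d * a` of `B` with `d ∣ c` and `a`
coprime to `N`. -/
lemma right_of_mem {B C : Set ℕ} (hC0 : 0 ∉ C) (h : eta C ∈ Xeta B) :
    ∀ c ∈ C, ∃ d ∈ E B, d ∣ c := by
  intro c hc
  have hc0 : 0 < c := Nat.pos_of_ne_zero fun h0 => hC0 (h0 ▸ hc)
  rw [Xeta, mem_orbitClosure_iff] at h
  refine exists_mem_E hc0 fun N hN => ?_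
  obtain ⟨m, hm⟩ := h ((Finset.range (N + 1)).image fun k : ℕ => (c:ℤ) * k)
  set g := Int.gcd m c with hg
  have hgc : g ∣ c := Int.natCast_dvd_natCast.1 (Int.gcd_dvd_right _ _)
  have hg0 : 0 < g := Nat.pos_of_dvd_of_pos hgc hc0
  obtain ⟨c', hc'⟩ := hgc
  obtain ⟨m', hm'⟩ : (g:ℤ) ∣ m := Int.gcd_dvd_left _ _
  have hco : Int.gcd m' c' = 1 := by
    have h1 : Int.gcd (g * m') (g * c') = g * Int.gcd m' c' := by
      rw [Int.gcd_mul_left, Int.natAbs_natCast]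
    rw [← hm', show (g:ℤ) * c' = (c:ℤ) by exact_mod_cast hc'.symm, ← hg] at h1
    exact Nat.eq_of_mul_eq_mul_left hg0 (by omega)
  obtain ⟨k, hkN, hk⟩ := exists_coprime_add m' c' hco hN
  have h1 := hm _ (Finset.mem_image_of_mem _ (Finset.mem_range.2 (Nat.lt_succ_of_le hkN)))
  have h2 : eta C ((c:ℤ) * k) = false := eta_eq_false.2 ⟨c, hc, dvd_mul_right _ _⟩
  rw [h2] at h1
  obtain ⟨b, hb, hdvd⟩ := eta_eq_false.1 h1.symm
  have h3 : (c:ℤ) * k + m = g * (m' + c' * k) := by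
    rw [hm', hc']
    push_cast
    ring
  rw [h3, Int.natCast_dvd, Int.natAbs_mul, Int.natAbs_natCast] at hdvd
  obtain ⟨d', a, hd', ha, rfl⟩ := split_dvd hdvd
  refine ⟨d', a, hd'.trans ⟨c', hc'⟩, ?_, hb⟩
  refine Nat.Coprime.coprime_dvd_left ha ?_
  rw [Int.gcd_eq_natAbs, Int.natAbs_natCast] at hk
  exact hk

/-- Successive choice, by the Chinese remainder theorem, of a translation `m0` putting all `n ∈ J`
into multiples of `B` with controlled cofactors, without creating new common divisors at the
places `x ∈ I`. -/
lemma crt_choice {B : Set ℕ} (hB : 0 ∉ B) (I : Finset ℤ) (d : ℤ → ℕ) {P0 : ℕ} (hP0 : 0 < P0)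
    (hI : ∀ x ∈ I, x.natAbs ∣ P0) (J : Finset ℤ) :
    (∀ n ∈ J, d n ∈ E B ∧ d n ∣ P0 ∧ (d n : ℤ) ∣ n) → (∀ n ∈ J, ∀ x ∈ I, (x - n).natAbs ∣ P0) →
    ∃ (P : ℕ) (m0 : ℤ), 0 < P ∧ P0 ∣ P ∧ (P0 : ℤ) ∣ m0 ∧
      (∀ n ∈ J, ∃ b ∈ B, b ∣ P ∧ (b : ℤ) ∣ n + m0) ∧
      ∀ x ∈ I, Int.gcd (x + m0) P = x.natAbs := by
  induction J using Finset.induction_on with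
  | empty =>
    intro _ _
    refine ⟨P0, 0, hP0, dvd_rfl, dvd_zero _, by simp, fun x hx => ?_⟩
    rw [add_zero, Int.gcd_eq_natAbs, Int.natAbs_natCast]
    exact Nat.gcd_eq_left (hI x hx)
  | insert n J _ ih =>
    intro hd hx
    obtain ⟨P, m0, hP, hPP, hm0, hJ, hgcd⟩ := ih
      (fun k hk => hd k (Finset.mem_insert_of_mem hk))
      (fun k hk => hx k (Finset.mem_insert_of_mem hk))
    obtain ⟨hdE, hdP, hdn⟩ := hd n (Finset.mem_insert_self n J)
    obtain ⟨a, ha, hda⟩ := hdE P hP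
    have ha0 : 0 < a := Nat.pos_of_ne_zero fun h0 => hB (by rw [h0, mul_zero] at hda; exact hda)
    obtain ⟨u, v, huv⟩ : IsCoprime (P:ℤ) (a:ℤ) := Nat.isCoprime_iff_coprime.2 ha.symm
    set m1 : ℤ := m0 + P * (u * (-n - m0)) with hm1
    have hnm : n + m1 = a * ((n + m0) * v) := by
      have : n + m1 = (n + m0) * (1 - u * P) := by rw [hm1]; ring
      rw [this, ← huv]
      ring
    have hPm : (P:ℤ) ∣ m1 - m0 := ⟨u * (-n - m0), by rw [hm1]; ring⟩
    have hP0m1 : (P0:ℤ) ∣ m1 := by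
      have := dvd_add ((Int.natCast_dvd_natCast.2 hPP).trans hPm) hm0
      rwa [sub_add_cancel] at this
    have hda_co : IsCoprime (d n : ℤ) (a : ℤ) :=
      Nat.isCoprime_iff_coprime.2 (ha.coprime_dvd_right (hdP.trans hPP)).symm
    refine ⟨P * a, m1, Nat.mul_pos hP ha0, hPP.mul_right a, hP0m1, ?_, ?_⟩
    · intro k hk
      rcases Finset.mem_insert.1 hk with rfl | hk
      · refine ⟨d k * a, hda, mul_dvd_mul (hdP.trans hPP) dvd_rfl, ?_⟩
        push_cast
        exact hda_co.mul_dvd (dvd_add hdn ((Int.natCast_dvd_natCast.2 hdP).trans hP0m1))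
          ⟨_, hnm⟩
      · obtain ⟨b, hb, hbP, hbk⟩ := hJ k hk
        refine ⟨b, hb, hbP.mul_right a, ?_⟩
        have := dvd_add hbk ((Int.natCast_dvd_natCast.2 hbP).trans hPm)
        rwa [show k + m0 + (m1 - m0) = k + m1 by ring] at this
    · intro x hxI
      have h1 : Int.gcd (x + m1) P = Int.gcd (x + m0) P := by
        have : x + m1 = (x + m0) + P * (u * (-n - m0)) := by rw [hm1]; ring
        rw [this, Int.gcd_add_mul_left_left]
      have h2 : Int.gcd (x + m1) a = 1 := by
        have : x + m1 = (x - n) + a * ((n + m0) * v) := by rw [← hnm]; ring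
        rw [this, Int.gcd_add_mul_left_left, Int.gcd_eq_natAbs, Int.natAbs_natCast]
        exact (ha.coprime_dvd_right
          ((hx n (Finset.mem_insert_self n J) x hxI).trans hPP)).symm
      rw [← hgcd x hxI, ← h1]
      rw [Int.gcd_eq_natAbs, Int.natAbs_natCast] at h2 ⊢
      rw [Nat.Coprime.gcd_mul _ ha.symm, h2, mul_one, Int.gcd_eq_natAbs, Int.natAbs_natCast]

/-- Multiples of `C` in a window are moved onto multiples of `B` by `crt_choice`, while `exists_free`
keeps the `C`-free positions `C`-free, hence `B`-free. -/
lemma mem_of_div {B C : Set ℕ} (hB : 0 ∉ B) (hC : Taut C) (hC0 : 0 ∉ C)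
    (h1 : ∀ b ∈ B, ∃ c ∈ C, c ∣ b) (h2 : ∀ c ∈ C, ∃ d ∈ E B, d ∣ c) : eta C ∈ Xeta B := by
  rw [Xeta, mem_orbitClosure_iff]
  intro W
  rcases C.eq_empty_or_nonempty with rfl | ⟨c0, hc0⟩
  · refine ⟨0, fun n _ => ?_⟩
    rw [add_zero, eta_eq_iff]
    exact iff_of_false (by simp [MB]) fun h => by simpa [MB] using MB_subset h1 h
  set I := W.filter (· ∉ MB C) with hIdef
  set J := W.filter (· ∈ MB C) with hJdef
  have hI : ∀ n ∈ I, n ∉ MB C := fun n hn => (Finset.mem_filter.1 hn).2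
  have hJ : ∀ n ∈ J, ∃ d ∈ E B, (d:ℤ) ∣ n := fun n hn => by
    obtain ⟨c, hc, hcn⟩ := (Finset.mem_filter.1 hn).2
    obtain ⟨d, hd, hdc⟩ := h2 c hc
    exact ⟨d, hd, (Int.natCast_dvd_natCast.2 hdc).trans hcn⟩
  choose! d hdE hdn using hJ
  have hI0 : ∀ n ∈ I, n ≠ 0 := fun n hn h => hI n hn ⟨c0, hc0, h ▸ dvd_zero _⟩
  have hIJ : ∀ n ∈ J, ∀ x ∈ I, x - n ≠ 0 := fun n hn x hx h0 =>
    hI x hx (by rw [sub_eq_zero.1 h0]; exact (Finset.mem_filter.1 hn).2)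
  obtain ⟨Q, hQ, hfree⟩ := exists_free hC hC0 I hI
  set R1 := ∏ n ∈ J, d n with hR1
  set R2 := ∏ n ∈ I, n.natAbs with hR2
  set R3 := ∏ n ∈ J, ∏ x ∈ I, (x - n).natAbs with hR3
  have hP0 : 0 < Q * (R1 * (R2 * R3)) := by
    refine Nat.mul_pos hQ (Nat.mul_pos ?_ (Nat.mul_pos ?_ ?_))
    · exact Finset.prod_pos fun n hn =>
        Nat.pos_of_ne_zero fun h => zero_notMem_E hB (h ▸ hdE n hn)
    · exact Finset.prod_pos fun n hn => Int.natAbs_pos.2 (hI0 n hn)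
    · exact Finset.prod_pos fun n hn => Finset.prod_pos fun x hx =>
        Int.natAbs_pos.2 (hIJ n hn x hx)
  obtain ⟨P, m0, hP, hPP, -, hb, hgcd⟩ := crt_choice hB I d hP0
    (fun x hx => (((Finset.dvd_prod_of_mem _ hx).mul_right _).mul_left _).mul_left _) J
    (fun n hn => ⟨hdE n hn, ((Finset.dvd_prod_of_mem _ hn).mul_right _).mul_left _, hdn n hn⟩)
    (fun n hn x hx => by
      have e1 : (x - n).natAbs ∣ ∏ x ∈ I, (x - n).natAbs :=
        Finset.dvd_prod_of_mem (fun x => (x - n).natAbs) hx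
      have e2 : (∏ x ∈ I, (x - n).natAbs) ∣ R3 :=
        Finset.dvd_prod_of_mem (fun n => ∏ x ∈ I, (x - n).natAbs) hn
      exact (((e1.trans e2).mul_left _).mul_left _).mul_left _)
  obtain ⟨m, hm, hmfree⟩ := hfree P hP ((dvd_mul_right _ _).trans hPP) m0 hgcd
  refine ⟨m, fun n hn => ?_⟩
  rw [eta_eq_iff]
  by_cases hnC : n ∈ MB C
  · obtain ⟨b, hbB, hbP, hbn⟩ := hb n (Finset.mem_filter.2 ⟨hn, hnC⟩)
    refine iff_of_true hnC ⟨b, hbB, ?_⟩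
    have := dvd_add hbn ((Int.natCast_dvd_natCast.2 hbP).trans hm)
    rwa [show n + m0 + (m - m0) = n + m by ring] at this
  · exact iff_of_false hnC fun h =>
      hmfree n (Finset.mem_filter.2 ⟨hn, hnC⟩) (MB_subset h1 h)

/-- The equivalence of the arithmetic condition and the four dynamical conditions, for an arbitrary
`B`. -/
lemma dynamical_tfae {B C : Set ℕ} (hB : 0 ∉ B) (hC0 : 0 ∉ C) (hC : Taut C)
    {νC : Measure (ℤ → Bool)} (hνC : IsMirsky C νC) :
    List.TFAE
      [ (∀ b ∈ B, ∃ c ∈ C, c ∣ b) ∧ (∀ c ∈ C, ∃ d ∈ E B, d ∣ c),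
        Xeta C ⊆ Xeta B,
        eta C ∈ Xeta B,
        νC ∈ InvM (Xeta B),
        InvM (Xeta C) ⊆ InvM (Xeta B) ] := by
  tfae_have 1 → 3 := fun h => mem_of_div hB hC hC0 h.1 h.2
  tfae_have 3 → 1 := fun h => ⟨left_of_mem hB hC hC0 h, right_of_mem hC0 h⟩
  tfae_have 3 → 2 := fun h => orbitClosure_subset h
  tfae_have 2 → 5 := fun h => InvM_mono h
  tfae_have 5 → 4 := fun h => h (mirsky_mem hνC)
  tfae_have 4 → 3 := fun h => mem_of_mirsky hC hC0 hνC h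
  tfae_finish

/-- for `𝓑 ⊆ ℕ` and taut `𝓒 ⊆ ℕ`, the twelve conditions
(a)-(f) and (a')-(f') are all equivalent. `νC` is the Mirsky measure of `η_𝓒`. -/
theorem statement3 (B C : Set ℕ) (hB : 0 ∉ B) (hC0 : 0 ∉ C) (hC : Taut C)
    (νC : Measure (ℤ → Bool)) (hνC : IsMirsky C νC) :
    List.TFAE
      [ (∀ b ∈ B, ∃ c ∈ C, c ∣ b) ∧ (∀ c ∈ C, ∃ b' ∈ Bstar B, b' ∣ c),
        ∀ n : ℤ, etaStar B n ≤ eta C n ∧ eta C n ≤ eta B n,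
        Xeta C ⊆ Xeta B,
        eta C ∈ Xeta B,
        νC ∈ InvM (Xeta B),
        InvM (Xeta C) ⊆ InvM (Xeta B),
        (∀ b ∈ Bprime B, ∃ c ∈ C, c ∣ b) ∧ (∀ c ∈ C, ∃ b' ∈ Bstar B, b' ∣ c),
        ∀ n : ℤ, etaStar B n ≤ eta C n ∧ eta C n ≤ etaPrime B n,
        Xeta C ⊆ Xeta (Bprime B),
        eta C ∈ Xeta (Bprime B),
        νC ∈ InvM (Xeta (Bprime B)),
        InvM (Xeta C) ⊆ InvM (Xeta (Bprime B)) ] := by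
  have hstar : (∀ c ∈ C, ∃ b' ∈ Bstar B, b' ∣ c) ↔ ∀ c ∈ C, ∃ d ∈ E B, d ∣ c :=
    forall₂_congr fun c _ => Bstar_iff hB c
  have hstar' : (∀ c ∈ C, ∃ b' ∈ Bstar B, b' ∣ c) ↔ ∀ c ∈ C, ∃ d ∈ E (Bprime B), d ∣ c :=
    hstar.trans (forall₂_congr fun c _ => (E_Bprime_iff hB c).symm)
  have T := dynamical_tfae hB hC0 hC hνC
  have T' := dynamical_tfae (zero_notMem_Bprime hB) hC0 hC hνC
  rw [← hstar] at T
  rw [← hstar'] at T'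
  have hb : ∀ B' : Set ℕ, (∀ n : ℤ, etaStar B n ≤ eta C n ∧ eta C n ≤ eta B' n) ↔
      (∀ b ∈ B', ∃ c ∈ C, c ∣ b) ∧ (∀ c ∈ C, ∃ b' ∈ Bstar B, b' ∣ c) := fun B' => by
    rw [← eta_le_iff B' C, ← eta_le_iff C (Bstar B), forall_and, and_comm]
    rfl
  tfae_have 1 ↔ 2 := (hb B).symm
  tfae_have 7 ↔ 8 := (hb (Bprime B)).symm
  tfae_have 1 → 7 := fun h => ⟨fun b hbB => hbB.1.elim (h.1 b)
    fun hc => Cset_div hC hC0 h.1 hB hc, h.2⟩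
  tfae_have 7 → 1 := fun h => ⟨fun b hbB => by
    obtain ⟨b', hb', hdvd⟩ := exists_Bprime hB b hbB
    obtain ⟨c, hc, hcb⟩ := h.1 b' hb'
    exact ⟨c, hc, hcb.trans hdvd⟩, h.2⟩
  tfae_have 1 ↔ 3 := T.out 0 1
  tfae_have 1 ↔ 4 := T.out 0 2
  tfae_have 1 ↔ 5 := T.out 0 3
  tfae_have 1 ↔ 6 := T.out 0 4
  tfae_have 7 ↔ 9 := T'.out 0 1
  tfae_have 7 ↔ 10 := T'.out 0 2
  tfae_have 7 ↔ 11 := T'.out 0 3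
  tfae_have 7 ↔ 12 := T'.out 0 4
  tfae_finish

end BFree
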